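/- arXiv:1608.08155 — 3 statements merged into one kernel-verified Lean document; each statement's English description precedes it below -/
import Mathlib

section
/- Let (R, m) be a Noetherian local ring and M a finitely generated R-module of dimension d. Then there exists a positive integer n such that every system of parameters y = y_1, ..., y_d of M contained in m^n satisfies the monomial property, i.e. (y)^lim_M ≠ M. -/
/-!
Let `S = R / Ann M`, a Noetherian local ring of dimension `d` over which `M` is faithful, and let
`x = x₁, …, x_d` be a system of parameters of `S`. The reason for the theorem is that the top local
cohomology `H^d_m(M)` does not vanish.

If no bound existed, then for each `a` there would be a system of parameters `y` contained in
`(x₁ ^ a, …, x_d ^ a)` and an exponent `t` with `(y₁ ⋯ y_d) ^ t M ⊆ (y₁ ^ (t+1), …) M`. Write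
`y = P x ^ a` and, for large `K`, `x ^ (K+a) = Q y ^ (t+1)`. The matrices `Q diag(y ^ t) P` and
`diag(x ^ K)` both map the vector `x ^ a` to `x ^ (K+a)`, so after multiplication by
`(x₁ ⋯ x_d) ^ (K+a)` their determinants agree modulo `(x₁ ^ (2K+2a), …)`. The first one, times this
product, maps `M` into `(x₁ ^ (2K+2a), …) M`, hence so does the second:
`(x₁ ⋯ x_d) ^ (a+2K) M ⊆ (x₁ ^ (2a+2K), …) M`. This says that every class `[m / (x₁ ⋯ x_d) ^ a]` in
`H^d_m(M)` is zero, a contradiction.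

Local cohomology is modelled by the Koszul homology of the elements `x j - X j` of `R[X₁, …, X_n]`
on the inverse polynomials `M[X₁⁻¹, …, X_n⁻¹]`. These are an exact functor of `M`, so there is a
long exact sequence. When the `x j` are nilpotent on `M`, each `x j - X j` is surjective on the
kernel of its predecessors, so only `H^0` survives, and it embeds into `M`. Dividing out an
Artinian submodule and then a regular element reduces everything to smaller dimension, which gives
vanishing above the dimension, Artinianness, and non-vanishing in degree `dim M`. For the latter,
suppose that `H^{e+1}(M) = 0`, where `e + 1 = dim M`. Then `H^e(M / rM)` is a quotient of the
Artinian module `H^e(M)`, and `r` can be chosen outside all attached primes of `H^e(M)` not lying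
over the maximal ideal. So each element of the maximal ideal acts nilpotently on `H^e(M / rM)`. If
`e > 0`, a regular element also acts surjectively on this top local cohomology, which is therefore
zero, against the induction hypothesis. If `e = 0`, then already `H^0(M) = 0`, because `r` is both
injective and locally nilpotent on it.
-/

open IsLocalRing

/-- The limit closure `(x)^lim_M = ⋃_{n>0} ((x₁^{n+1}, …, x_r^{n+1})M :_M (x₁⋯x_r)^n)` of a
sequence `x = x₁, …, x_r` of elements of `R` in the module `M`; the union of the increasing
family of submodules is expressed as a supremum. -/
def limitClosure {R : Type*} [CommRing R] {M : Type*} [AddCommGroup M] [Module R M]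
    {r : ℕ} (x : Fin r → R) : Submodule R M :=
  ⨆ n : ℕ, (Ideal.span (Set.range fun i => x i ^ (n + 2)) • (⊤ : Submodule R M)).comap
    (LinearMap.lsmul R M ((∏ i, x i) ^ (n + 1)))

/-- The dimension of a module `M`: the Krull dimension of `R ⧸ Ann M`. -/
noncomputable def moduleDim (R M : Type*) [CommRing R] [AddCommGroup M] [Module R M] :
    WithBot ℕ∞ :=
  ringKrullDim (R ⧸ Module.annihilator R M)

/-- A system of parameters of a `d`-dimensional module `M` over a Noetherian local ring:
a sequence of `d` elements of the maximal ideal such that `M/(x₁, …, x_d)M` has finite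
length. -/
def IsSystemOfParameters {R : Type*} [CommRing R] [IsLocalRing R] (M : Type*)
    [AddCommGroup M] [Module R M] {d : ℕ} (x : Fin d → R) : Prop :=
  (∀ i, x i ∈ maximalIdeal R) ∧
    IsFiniteLength R (M ⧸ (Ideal.span (Set.range x) • (⊤ : Submodule R M)))

namespace MonomialProperty

open Submodule

/-! ### Koszul homology -/

namespace Koszul

variable {A : Type*} [CommRing A] {ι : Type*} (v : ι → A)
variable {W W' W'' : Type*} [AddCommGroup W] [Module A W] [AddCommGroup W'] [Module A W']
  [AddCommGroup W''] [Module A W'']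

/-- The differential of the Koszul complex of the family `v` with coefficients in `W`. The chains of
degree `p` are encoded as the alternating `p`-forms on `ι → A`, and the differential as the
contraction with the vector `v`. -/
def d (p : ℕ) : (ι → A) [⋀^Fin (p + 1)]→ₗ[A] W →ₗ[A] (ι → A) [⋀^Fin p]→ₗ[A] W where
  toFun ω := ω.curryLeft v
  map_add' _ _ := rfl
  map_smul' _ _ := rfl

lemma d_apply (p : ℕ) (ω : (ι → A) [⋀^Fin (p + 1)]→ₗ[A] W) (u : Fin p → ι → A) :
    d v p ω u = ω (Matrix.vecCons v u) := rfl

lemma d_d (p : ℕ) (ω : (ι → A) [⋀^Fin (p + 2)]→ₗ[A] W) : d v p (d v (p + 1) ω) = 0 :=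
  ω.curryLeft_same v

/-- The map of Koszul chains induced by a map of coefficients. -/
def chainMap (ι : Type*) (p : ℕ) (f : W →ₗ[A] W') :
    (ι → A) [⋀^Fin p]→ₗ[A] W →ₗ[A] (ι → A) [⋀^Fin p]→ₗ[A] W' :=
  f.compAlternatingMapₗ A

lemma chainMap_injective (p : ℕ) {f : W →ₗ[A] W'} (hf : Function.Injective f) :
    Function.Injective (chainMap ι p f) :=
  fun _ _ h => AlternatingMap.ext fun u => hf (DFunLike.congr_fun h u)

lemma chainMap_surjective [Finite ι] (p : ℕ) {f : W →ₗ[A] W'}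
    (hf : Function.Surjective f) : Function.Surjective (chainMap ι p f) := by
  intro ω
  -- Forms of degree `p` are linear maps out of the free module `⋀^p (ι → A)`.
  obtain ⟨l, hl⟩ := Module.projective_lifting_property f
    (exteriorPower.alternatingMapLinearEquiv ω) hf
  refine ⟨l.compAlternatingMap (exteriorPower.ιMulti A p), AlternatingMap.ext fun u => ?_⟩
  simpa [chainMap] using LinearMap.congr_fun hl (exteriorPower.ιMulti A p u)

lemma chainMap_exact (p : ℕ) {f : W →ₗ[A] W'} {g : W' →ₗ[A] W''} (hf : Function.Injective f)
    (hfg : Function.Exact f g) : Function.Exact (chainMap ι p f) (chainMap ι p g) := by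
  refine fun ω => ⟨fun h => ?_, ?_⟩
  · have hω : ∀ u, ω u ∈ LinearMap.range f := fun u => (hfg _).1 (DFunLike.congr_fun h u)
    refine ⟨(LinearEquiv.ofInjective f hf).symm.toLinearMap.compAlternatingMap
      (ω.codRestrict _ hω), AlternatingMap.ext fun u => ?_⟩
    exact congrArg Subtype.val ((LinearEquiv.ofInjective f hf).apply_symm_apply ⟨ω u, hω u⟩)
  · rintro ⟨η, rfl⟩
    exact AlternatingMap.ext fun u => hfg.apply_apply_eq_zero _

/-- The Koszul cycles of degree `p`; in degree `0` every chain is a cycle. -/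
def cycles (W : Type*) [AddCommGroup W] [Module A W] :
    (p : ℕ) → Submodule A ((ι → A) [⋀^Fin p]→ₗ[A] W)
  | 0 => ⊤
  | p + 1 => LinearMap.ker (d v p)

lemma d_mem_cycles (p : ℕ) (ω : (ι → A) [⋀^Fin (p + 1)]→ₗ[A] W) : d v p ω ∈ cycles v W p := by
  cases p with
  | zero => trivial
  | succ p => exact d_d v p ω

lemma chainMap_mem_cycles (p : ℕ) (f : W →ₗ[A] W') {ω : (ι → A) [⋀^Fin p]→ₗ[A] W}
    (h : ω ∈ cycles v W p) : chainMap ι p f ω ∈ cycles v W' p := by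
  cases p with
  | zero => trivial
  | succ p => exact congrArg (chainMap ι p f) h |>.trans (map_zero _)

lemma mem_cycles_of_chainMap_mem (p : ℕ) {f : W →ₗ[A] W'} (hf : Function.Injective f)
    {ω : (ι → A) [⋀^Fin p]→ₗ[A] W} (h : chainMap ι p f ω ∈ cycles v W' p) : ω ∈ cycles v W p := by
  cases p with
  | zero => trivial
  | succ p => exact chainMap_injective p hf (h.trans (map_zero (chainMap ι p f)).symm)

/-- The Koszul differential as a map onto the boundaries inside the cycles. -/
def toCycles (W : Type*) [AddCommGroup W] [Module A W] (p : ℕ) :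
    (ι → A) [⋀^Fin (p + 1)]→ₗ[A] W →ₗ[A] cycles v W p :=
  (d v p).codRestrict _ (d_mem_cycles v p)

/-- The Koszul homology `H_p(v; W)`: cycles modulo boundaries. -/
abbrev H (W : Type*) [AddCommGroup W] [Module A W] (p : ℕ) :=
  cycles v W p ⧸ LinearMap.range (toCycles v W p)

/-- The map of Koszul cycles induced by a map of coefficients. -/
def cyclesMap (p : ℕ) (f : W →ₗ[A] W') : cycles v W p →ₗ[A] cycles v W' p :=
  (chainMap ι p f).restrict fun _ => chainMap_mem_cycles v p f

lemma cyclesMap_injective (p : ℕ) {f : W →ₗ[A] W'} (hf : Function.Injective f) :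
    Function.Injective (cyclesMap v p f) :=
  fun _ _ h => Subtype.ext (chainMap_injective p hf (congrArg Subtype.val h))

lemma cyclesMap_exact (p : ℕ) {f : W →ₗ[A] W'} {g : W' →ₗ[A] W''} (hf : Function.Injective f)
    (hfg : Function.Exact f g) : Function.Exact (cyclesMap v p f) (cyclesMap v p g) := by
  refine fun z => ⟨fun h => ?_, ?_⟩
  · obtain ⟨a, ha⟩ := (chainMap_exact p hf hfg z.1).1 (congrArg Subtype.val h)
    exact ⟨⟨a, mem_cycles_of_chainMap_mem v p hf (ha ▸ z.2)⟩, Subtype.ext ha⟩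
  · rintro ⟨z, rfl⟩
    exact Subtype.ext ((chainMap_exact p hf hfg).apply_apply_eq_zero z.1)

/-- The map of Koszul homology induced by a map of coefficients. -/
def map (p : ℕ) (f : W →ₗ[A] W') : H v W p →ₗ[A] H v W' p :=
  mapQ _ _ (cyclesMap v p f) <| by
    rintro _ ⟨ω, rfl⟩
    exact ⟨chainMap ι (p + 1) f ω, rfl⟩

lemma map_mkQ (p : ℕ) (f : W →ₗ[A] W') (z : cycles v W p) :
    map v p f (mkQ _ z) = mkQ _ (cyclesMap v p f z) := rfl

lemma map_smul_id (p : ℕ) (a : A) : map v p (a • LinearMap.id : W →ₗ[A] W) = a • LinearMap.id := by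
  ext; rfl

lemma map_zero_surjective [Finite ι] {g : W →ₗ[A] W'} (hg : Function.Surjective g) :
    Function.Surjective (map v 0 g) := by
  intro h
  obtain ⟨z, rfl⟩ := mkQ_surjective _ h
  obtain ⟨b, hb⟩ := chainMap_surjective 0 hg z.1
  exact ⟨mkQ _ ⟨b, trivial⟩, congrArg (mkQ _) (Subtype.ext hb)⟩

/-- The homology isomorphism induced by an isomorphism of coefficients. -/
def mapEquiv (p : ℕ) (e : W ≃ₗ[A] W') : H v W p ≃ₗ[A] H v W' p :=
  LinearEquiv.ofLinearMap (map v p e.toLinearMap) (map v p e.symm.toLinearMap)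
    (by
      ext z : 3
      exact congrArg (mkQ _) (Subtype.ext (AlternatingMap.ext fun u => e.apply_symm_apply _)))
    (by
      ext z : 3
      exact congrArg (mkQ _) (Subtype.ext (AlternatingMap.ext fun u => e.symm_apply_apply _)))

variable {f : W →ₗ[A] W'} {g : W' →ₗ[A] W''}

lemma map_exact [Finite ι] (p : ℕ) (hf : Function.Injective f)
    (hg : Function.Surjective g) (hfg : Function.Exact f g) :
    Function.Exact (map v p f) (map v p g) := by
  intro h
  obtain ⟨z, rfl⟩ := mkQ_surjective _ h
  refine ⟨fun h => ?_, ?_⟩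
  · obtain ⟨c, hc⟩ := (Submodule.Quotient.mk_eq_zero _).1 h
    obtain ⟨b, rfl⟩ := chainMap_surjective (p + 1) hg c
    obtain ⟨a, ha⟩ := (cyclesMap_exact v p hf hfg (z - toCycles v W' p b)).1
      (by rw [map_sub, ← hc]; exact sub_self _)
    refine ⟨mkQ _ a, ?_⟩
    rw [map_mkQ, ha, map_sub, sub_eq_self]
    exact (Submodule.Quotient.mk_eq_zero _).2 ⟨b, rfl⟩
  · rintro ⟨h, e⟩
    obtain ⟨a, rfl⟩ := mkQ_surjective _ h
    rw [← e, map_mkQ, map_mkQ, (cyclesMap_exact v p hf hfg).apply_apply_eq_zero, map_zero]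

lemma exact_subtype_toCycles (p : ℕ) :
    Function.Exact (cycles v W (p + 1)).subtype (toCycles v W p) := by
  rw [LinearMap.exact_iff, range_subtype]
  exact LinearMap.ker_codRestrict _ _ _

/-- The snake lemma for the differentials `C_{p+1} → Z_p`. -/
lemma exists_exact_cyclesMap_connecting [Finite ι] (p : ℕ) (hf : Function.Injective f)
    (hg : Function.Surjective g) (hfg : Function.Exact f g) :
    ∃ δ : cycles v W'' (p + 1) →ₗ[A] H v W p,
      Function.Exact (cyclesMap v (p + 1) g) δ ∧ Function.Exact δ (map v p f) :=
  ⟨SnakeLemma.δ' (toCycles v W p) (toCycles v W' p) (toCycles v W'' p)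
      (chainMap ι (p + 1) f) (chainMap ι (p + 1) g) (chainMap_exact (p + 1) hf hfg)
      (cyclesMap v p f) (cyclesMap v p g) (cyclesMap_exact v p hf hfg) rfl rfl
      _ (exact_subtype_toCycles v p) _ (toCycles v W p).exact_map_mkQ_range
      (chainMap_surjective (p + 1) hg) (cyclesMap_injective v p hf),
    SnakeLemma.exact_δ'_right _ _ _ _ _ _ _ _ _ _ _ _ (exact_subtype_toCycles v p)
      _ _ _ _ _ _ _ rfl (injective_subtype _),
    SnakeLemma.exact_δ'_left _ _ _ _ _ _ _ _ _ _ _ _ _ _ _ _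
      (toCycles v W' p).exact_map_mkQ_range _ _ _ rfl (mkQ_surjective _)⟩

lemma exists_exact_map_connecting [Finite ι] (p : ℕ) (hf : Function.Injective f)
    (hg : Function.Surjective g) (hfg : Function.Exact f g) :
    ∃ δ : H v W'' (p + 1) →ₗ[A] H v W p,
      Function.Exact (map v (p + 1) g) δ ∧ Function.Exact δ (map v p f) := by
  obtain ⟨δ, hgδ, hδf⟩ := exists_exact_cyclesMap_connecting v p hf hg hfg
  have hδ : LinearMap.range (toCycles v W'' (p + 1)) ≤ LinearMap.ker δ := by
    rintro _ ⟨c, rfl⟩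
    obtain ⟨b, rfl⟩ := chainMap_surjective (p + 2) hg c
    exact (hgδ _).2 ⟨toCycles v W' (p + 1) b, rfl⟩
  refine ⟨liftQ _ δ hδ, fun h => ⟨fun h0 => ?_, ?_⟩, fun h => ⟨fun h0 => ?_, ?_⟩⟩
  · obtain ⟨z, rfl⟩ := mkQ_surjective _ h
    obtain ⟨b, rfl⟩ := (hgδ z).1 h0
    exact ⟨mkQ _ b, rfl⟩
  · rintro ⟨h, rfl⟩
    obtain ⟨b, rfl⟩ := mkQ_surjective _ h
    exact hgδ.apply_apply_eq_zero b
  · obtain ⟨z, rfl⟩ := (hδf h).1 h0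
    exact ⟨mkQ _ z, rfl⟩
  · rintro ⟨h, rfl⟩
    obtain ⟨z, rfl⟩ := mkQ_surjective _ h
    exact hδf.apply_apply_eq_zero z

/-- The homotopy is the exterior multiplication by the coordinate form `j`. -/
lemma smul_eq_zero (p : ℕ) (j : ι) (h : H v W p) : v j • h = 0 := by
  obtain ⟨⟨z, hz⟩, rfl⟩ := mkQ_surjective _ h
  rw [← map_smul]
  let coord : (ι → A) →ₗ[A] A := LinearMap.proj j
  refine (Submodule.Quotient.mk_eq_zero _).2
    ⟨AlternatingMap.alternatizeUncurryFin (coord.smulRight z), Subtype.ext ?_⟩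
  ext u
  change d v p (AlternatingMap.alternatizeUncurryFin (coord.smulRight z)) u = _
  have hz_succ (i : Fin p) : z (Fin.removeNth i.succ (Matrix.vecCons v u)) = 0 := by
    cases p with
    | zero => exact i.elim0
    | succ p =>
      have hcons :
          Fin.removeNth i.succ (Matrix.vecCons v u) = Matrix.vecCons v (i.removeNth u) := by
        ext k : 1
        cases k using Fin.cases <;> simp [Fin.removeNth, Fin.succ_succAbove_succ]
      rw [hcons]
      exact DFunLike.congr_fun hz (i.removeNth u)
  rw [d_apply, AlternatingMap.alternatizeUncurryFin_apply, Fin.sum_univ_succ]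
  simp [coord, hz_succ]

lemma subsingleton_of_card_lt [Fintype ι] {p : ℕ} (hp : Fintype.card ι < p) :
    Subsingleton (H v W p) := by
  classical
  have : Subsingleton ((ι → A) [⋀^Fin p]→ₗ[A] W) := by
    refine ⟨fun a b => (Pi.basisFun A ι).ext_alternating fun s hs => ?_⟩
    have := Fintype.card_le_of_injective s hs
    rw [Fintype.card_fin] at this
    omega
  exact (mkQ_surjective _).subsingleton

lemma subsingleton_of_subsingleton (p : ℕ) [Subsingleton W] : Subsingleton (H v W p) := by
  have : Subsingleton ((ι → A) [⋀^Fin p]→ₗ[A] W) :=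
    ⟨fun a b => AlternatingMap.ext fun u => Subsingleton.elim _ _⟩
  exact (mkQ_surjective _).subsingleton

lemma exists_pow_smul_eq_zero [Finite ι] (p : ℕ) (a : A) (hW : ∀ w : W, ∃ k, a ^ k • w = 0)
    (h : H v W p) : ∃ k, a ^ k • h = 0 := by
  classical
  cases nonempty_fintype ι
  obtain ⟨⟨z, hz⟩, rfl⟩ := mkQ_surjective _ h
  choose k hk using hW
  let e (s : Fin p → ι) : W := z fun i => Pi.basisFun A ι (s i)
  suffices h0 : a ^ (∑ s, k (e s)) • z = 0 from
    ⟨∑ s, k (e s), by rw [← map_smul]; exact congrArg (mkQ _) (Subtype.ext h0)⟩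
  refine (Pi.basisFun A ι).ext_alternating fun s _ => ?_
  exact torsionBy_le_torsionBy_of_dvd _ _
    (pow_dvd_pow a (Finset.single_le_sum_of_canonicallyOrdered (Finset.mem_univ s))) (hk (e s))

/-- The class in degree `0` of an element of `W`. -/
def ofCoeff : W →ₗ[A] H v W 0 :=
  mkQ _ ∘ₗ ((AlternatingMap.constLinearEquivOfIsEmpty (ι := Fin 0)).trans
    (topEquiv (M := (ι → A) [⋀^Fin 0]→ₗ[A] W)).symm).toLinearMap

lemma ofCoeff_surjective : Function.Surjective (ofCoeff (W := W) v) :=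
  (mkQ_surjective _).comp (LinearEquiv.surjective _)

lemma span_range_le_annihilator (p : ℕ) :
    Ideal.span (Set.range v) ≤ Module.annihilator A (H v W p) := by
  rw [Ideal.span_le]
  rintro _ ⟨j, rfl⟩
  exact Module.mem_annihilator.2 (smul_eq_zero v p j)

lemma ofCoeff_injective [Finite ι] (h : ∀ (j : ι) (w : W), v j • w = 0) :
    Function.Injective (ofCoeff (W := W) v) := by
  classical
  cases nonempty_fintype ι
  refine (injective_iff_map_eq_zero _).2 fun w hw => ?_
  obtain ⟨ω, hω⟩ := (Submodule.Quotient.mk_eq_zero _).1 hw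
  let l : (ι → A) →ₗ[A] W := (AlternatingMap.ofSubsingleton A (ι → A) W (0 : Fin 1)).symm ω
  have hl : l v = w := by
    refine Eq.trans (congrArg ω ?_) (DFunLike.congr_fun (congrArg Subtype.val hω) ![])
    ext k : 1
    rw [Subsingleton.elim k 0]
    rfl
  rw [← hl, LinearMap.pi_apply_eq_sum_univ]
  exact Finset.sum_eq_zero fun j _ => h j _

lemma subsingleton_zero_of_surjective_smul [Finite ι] {j : ι}
    (hs : Function.Surjective (v j • LinearMap.id : W →ₗ[A] W)) : Subsingleton (H v W 0) := by
  refine subsingleton_of_forall_eq 0 fun y => ?_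
  obtain ⟨z, rfl⟩ := map_zero_surjective v hs y
  rw [map_smul_id]
  exact smul_eq_zero v 0 j z

/-- Multiplication by `v j` is zero on homology, so the long exact sequence splits into short
ones. -/
lemma exists_injective_connecting [Finite ι] {j : ι} (hf : Function.Injective f)
    (hs : Function.Surjective (v j • LinearMap.id : W' →ₗ[A] W'))
    (hfs : Function.Exact f (v j • LinearMap.id : W' →ₗ[A] W')) (p : ℕ) :
    ∃ δ : H v W' (p + 1) →ₗ[A] H v W p, Function.Injective δ ∧ Function.Exact δ (map v p f) := by
  obtain ⟨δ, hsδ, hδf⟩ := exists_exact_map_connecting v p hf hs hfs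
  refine ⟨δ, (injective_iff_map_eq_zero _).2 fun y hy => ?_, hδf⟩
  obtain ⟨z, rfl⟩ := (hsδ y).1 hy
  rw [map_smul_id]
  exact smul_eq_zero v (p + 1) j z

section Coregular

variable {n : ℕ} (u : Fin n → A)

/-- The submodule of `W` annihilated by the first `k` terms of the sequence `u`. -/
def initTorsion (W : Type*) [AddCommGroup W] [Module A W] (k : ℕ) : Submodule A W :=
  torsionBySet A W (u '' {i | (i : ℕ) < k})

/-- The sequence `u` is coregular on `W`: each term acts surjectively on the submodule annihilated
by the preceding ones. -/
def IsCoregular (W : Type*) [AddCommGroup W] [Module A W] : Prop :=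
  ∀ k : Fin n, ∀ w ∈ initTorsion u W k, ∃ w' ∈ initTorsion u W k, u k • w' = w

lemma mem_initTorsion {k : ℕ} {w : W} :
    w ∈ initTorsion u W k ↔ ∀ i : Fin n, (i : ℕ) < k → u i • w = 0 := by
  simp [initTorsion, mem_torsionBySet_iff]

lemma initTorsion_zero : initTorsion u W 0 = ⊤ := by
  rw [eq_top_iff]
  exact fun w _ => (mem_initTorsion u).2 fun _ hi => absurd hi (Nat.not_lt_zero _)

lemma initTorsion_succ_le (k : ℕ) : initTorsion u W (k + 1) ≤ initTorsion u W k :=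
  torsionBySet_le_torsionBySet_of_subset <| Set.image_mono fun _ hi => Nat.lt_succ_of_lt hi

lemma exact_inclusion_initTorsion (k : Fin n) :
    Function.Exact (inclusion (initTorsion_succ_le u (W := W) k))
      (u k • LinearMap.id : initTorsion u W k →ₗ[A] initTorsion u W k) := by
  rintro ⟨w, hw⟩
  have hw_succ : u k • w = 0 ↔ w ∈ initTorsion u W (k + 1) := by
    rw [mem_initTorsion] at hw ⊢
    refine ⟨fun h i hi => ?_, fun h => h k (Nat.lt_succ_self k)⟩
    rcases Nat.lt_succ_iff_lt_or_eq.1 hi with hi | hi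
    · exact hw i hi
    · rwa [Fin.ext hi]
  rw [← LinearMap.coe_range, range_inclusion]
  exact Subtype.ext_iff.trans hw_succ

variable {u} (hu : IsCoregular u W)
include hu

lemma IsCoregular.smul_surjective (k : Fin n) :
    Function.Surjective (u k • LinearMap.id : initTorsion u W k →ₗ[A] initTorsion u W k) := by
  rintro ⟨w, hw⟩
  obtain ⟨w', hw', rfl⟩ := hu k w hw
  exact ⟨⟨w', hw'⟩, rfl⟩

lemma IsCoregular.subsingleton_initTorsion (p : ℕ) :
    ∀ k, p + k < n → Subsingleton (H u (initTorsion u W k) p) := by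
  induction p with
  | zero =>
    intro k hk
    exact subsingleton_zero_of_surjective_smul u (hu.smul_surjective ⟨k, by omega⟩)
  | succ p ih =>
    intro k hk
    obtain ⟨δ, hδ, -⟩ := exists_injective_connecting u (inclusion_injective _)
      (hu.smul_surjective ⟨k, by omega⟩) (exact_inclusion_initTorsion u ⟨k, by omega⟩) p
    have := ih (k + 1) (by omega)
    exact hδ.subsingleton

lemma IsCoregular.nonempty_equiv_initTorsion (p : ℕ) :
    ∀ k, p + k = n → Nonempty (H u (initTorsion u W k) p ≃ₗ[A] initTorsion u W n) := by
  induction p with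
  | zero =>
    intro k hk
    obtain rfl : k = n := by omega
    have hsmul (j : Fin k) (w : initTorsion u W k) : u j • w = 0 :=
      Subtype.ext ((mem_initTorsion u).1 w.2 j j.2)
    exact ⟨.symm <| .ofBijective (ofCoeff u) ⟨ofCoeff_injective u hsmul, ofCoeff_surjective u⟩⟩
  | succ p ih =>
    intro k hk
    obtain ⟨δ, hδ, hδf⟩ := exists_injective_connecting u (inclusion_injective _)
      (hu.smul_surjective ⟨k, by omega⟩) (exact_inclusion_initTorsion u ⟨k, by omega⟩) p
    have := hu.subsingleton_initTorsion p k (by omega)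
    obtain ⟨e⟩ := ih (k + 1) (by omega)
    have hδ' : Function.Surjective δ := fun y => (hδf y).1 (Subsingleton.elim _ _)
    exact ⟨.trans (.ofBijective δ ⟨hδ, hδ'⟩) e⟩

theorem IsCoregular.subsingleton {p : ℕ} (hp : p < n) : Subsingleton (H u W p) := by
  have := hu.subsingleton_initTorsion p 0 hp
  rw [initTorsion_zero] at this
  exact (mapEquiv u p topEquiv).symm.injective.subsingleton

theorem IsCoregular.nonempty_equiv_torsion :
    Nonempty (H u W n ≃ₗ[A] torsionBySet A W (Set.range u)) := by
  obtain ⟨e⟩ := hu.nonempty_equiv_initTorsion n 0 rfl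
  rw [initTorsion_zero] at e
  have htop : initTorsion u W n = torsionBySet A W (Set.range u) := by
    simp [initTorsion, Set.image_univ]
  exact ⟨(mapEquiv u n topEquiv).symm.trans (e.trans (.ofEq _ _ htop))⟩

end Coregular

end Koszul

/-! ### Inverse polynomials -/

/-- Inverse polynomials in the variables `σ` with coefficients in `M`, encoded as finitely supported
functions on the exponents, the exponent `α` standing for the monomial `X ^ (-α)`. -/
def InvPoly (σ M : Type*) [Zero M] := (σ →₀ ℕ) →₀ M

namespace InvPoly

open MvPolynomial (X C)

variable {R : Type*} [CommRing R] {σ : Type*}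
variable {M M' M'' : Type*} [AddCommGroup M] [Module R M] [AddCommGroup M'] [Module R M']
  [AddCommGroup M''] [Module R M'']

noncomputable section

instance : AddCommGroup (InvPoly σ M) := inferInstanceAs (AddCommGroup ((σ →₀ ℕ) →₀ M))

instance : Module R (InvPoly σ M) := inferInstanceAs (Module R ((σ →₀ ℕ) →₀ M))

instance : FunLike (InvPoly σ M) (σ →₀ ℕ) M :=
  inferInstanceAs (FunLike ((σ →₀ ℕ) →₀ M) (σ →₀ ℕ) M)

@[ext] lemma ext {w w' : InvPoly σ M} (h : ∀ α, w α = w' α) : w = w' := Finsupp.ext h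

@[simp] lemma zero_apply (α : σ →₀ ℕ) : (0 : InvPoly σ M) α = 0 := rfl

@[simp] lemma smul_apply (r : R) (w : InvPoly σ M) (α : σ →₀ ℕ) : (r • w) α = r • w α := rfl

/-- The inverse polynomial `m X ^ (-α)`. -/
def single (R : Type*) [CommRing R] [Module R M] (α : σ →₀ ℕ) : M →ₗ[R] InvPoly σ M :=
  Finsupp.lsingle α

@[elab_as_elim]
lemma induction_linear {motive : InvPoly σ M → Prop} (w : InvPoly σ M) (zero : motive 0)
    (add : ∀ w w', motive w → motive w' → motive (w + w'))
    (single : ∀ α m, motive (single R α m)) : motive w :=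
  Finsupp.induction_linear (motive := motive) w zero add single

lemma single_apply_self (α : σ →₀ ℕ) (m : M) : single R α m α = m := Finsupp.single_eq_same

lemma single_apply_of_ne {α β : σ →₀ ℕ} (h : β ≠ α) (m : M) : single R α m β = 0 :=
  Finsupp.single_eq_of_ne h

/-- Multiplication of inverse polynomials by the monomial `X ^ β`. -/
def shift (R : Type*) [CommRing R] (M : Type*) [AddCommGroup M] [Module R M] (β : σ →₀ ℕ) :
    Module.End R (InvPoly σ M) :=
  Finsupp.lcomapDomain (· + β) (add_left_injective β)

@[simp] lemma shift_apply (β : σ →₀ ℕ) (w : InvPoly σ M) (α : σ →₀ ℕ) :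
    shift R M β w α = w (α + β) := rfl

/-- The monoid of monomials acting on inverse polynomials. -/
def shiftMonoidHom (R σ : Type*) [CommRing R] (M : Type*) [AddCommGroup M] [Module R M] :
    Multiplicative (σ →₀ ℕ) →* Module.End R (InvPoly σ M) where
  toFun β := shift R M β.toAdd
  map_one' := by ext w α; simp
  map_mul' β γ := by ext w α; simp [add_comm, add_left_comm]

instance : Module (MvPolynomial σ R) (InvPoly σ M) :=
  Module.compHom _
    (AddMonoidAlgebra.lift R (Module.End R (InvPoly σ M)) (σ →₀ ℕ)
      (shiftMonoidHom R σ M)).toRingHom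

lemma monomial_smul (β : σ →₀ ℕ) (r : R) (w : InvPoly σ M) :
    MvPolynomial.monomial β r • w = r • shift R M β w :=
  LinearMap.congr_fun (AddMonoidAlgebra.lift_single (F := shiftMonoidHom R σ M) β r) w

lemma C_smul (r : R) (w : InvPoly σ M) : (C r : MvPolynomial σ R) • w = r • w := by
  rw [MvPolynomial.C_apply, monomial_smul]
  congr 1
  ext α
  simp

instance : IsScalarTower R (MvPolynomial σ R) (InvPoly σ M) :=
  ⟨fun r b w => by rw [← C_smul, smul_smul, MvPolynomial.smul_eq_C_mul]⟩

lemma X_pow_smul_apply (j : σ) (k : ℕ) (w : InvPoly σ M) (α : σ →₀ ℕ) :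
    ((X j ^ k : MvPolynomial σ R) • w) α = w (α + Finsupp.single j k) := by
  rw [MvPolynomial.X_pow_eq_monomial, monomial_smul, one_smul, shift_apply]

lemma X_smul_apply (j : σ) (w : InvPoly σ M) (α : σ →₀ ℕ) :
    ((X j : MvPolynomial σ R) • w) α = w (α + Finsupp.single j 1) := by
  rw [← X_pow_smul_apply (R := R), pow_one]

lemma monomial_smul_single_add (α γ : σ →₀ ℕ) (m : M) :
    (MvPolynomial.monomial γ 1 : MvPolynomial σ R) • single R (α + γ) m =
      single R α m := by
  classical
  rw [monomial_smul, one_smul]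
  ext δ
  rw [shift_apply]
  change Finsupp.single (α + γ) m (δ + γ) = Finsupp.single α m δ
  simp only [Finsupp.single_apply, add_left_inj]

lemma X_pow_smul_single_eq_zero {α : σ →₀ ℕ} {j : σ} {k : ℕ} (h : α j < k) (m : M) :
    (X j ^ k : MvPolynomial σ R) • single R α m = 0 := by
  ext β
  rw [X_pow_smul_apply, single_apply_of_ne, zero_apply]
  rintro rfl
  simp at h

lemma exists_X_pow_smul_eq_zero (j : σ) (w : InvPoly σ M) :
    ∃ k, (X j ^ k : MvPolynomial σ R) • w = 0 := by
  refine ⟨(Finsupp.support w).sup (fun α => α j) + 1, ?_⟩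
  ext α
  rw [X_pow_smul_apply, zero_apply]
  by_contra hne
  have hle := Finset.le_sup (f := fun α : σ →₀ ℕ => α j) (Finsupp.mem_support_iff.2 hne)
  rw [Finsupp.add_apply, Finsupp.single_eq_same] at hle
  omega

/-- Multiplication by the inverse variable `X j ^ (-1)`. -/
def mulInvX (R : Type*) [CommRing R] [Module R M] (j : σ) : InvPoly σ M →ₗ[R] InvPoly σ M :=
  Finsupp.lmapDomain M R (· + Finsupp.single j 1)

lemma mulInvX_apply_add (j : σ) (w : InvPoly σ M) (α : σ →₀ ℕ) :
    mulInvX R j w (α + Finsupp.single j 1) = w α :=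
  Finsupp.mapDomain_apply (add_left_injective (Finsupp.single j 1)) w α

lemma mulInvX_apply_of_eq_zero {j : σ} {α : σ →₀ ℕ} (h : α j = 0) (w : InvPoly σ M) :
    mulInvX R j w α = 0 := by
  refine Finsupp.mapDomain_of_notMem_range w α ?_
  rintro ⟨β, rfl⟩
  simp at h

lemma X_smul_mulInvX (j : σ) (w : InvPoly σ M) :
    (X j : MvPolynomial σ R) • mulInvX R j w = w := by
  ext α
  rw [X_smul_apply, mulInvX_apply_add]

lemma X_smul_mulInvX_of_ne {i j : σ} (h : i ≠ j) (w : InvPoly σ M) :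
    (X i : MvPolynomial σ R) • mulInvX R j w =
      mulInvX R j ((X i : MvPolynomial σ R) • w) := by
  ext α
  rw [X_smul_apply]
  by_cases hα : α j = 0
  · rw [mulInvX_apply_of_eq_zero hα, mulInvX_apply_of_eq_zero]
    simp [hα, Finsupp.single_eq_of_ne h.symm]
  · obtain ⟨β, rfl⟩ := exists_add_of_le (Finsupp.single_le_iff.2 (Nat.one_le_iff_ne_zero.2 hα))
    rw [add_comm (Finsupp.single j 1) β, mulInvX_apply_add, X_smul_apply, add_right_comm,
      mulInvX_apply_add]

/-- The map of inverse polynomials induced by a map of coefficients. -/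
def map (σ : Type*) (f : M →ₗ[R] M') : InvPoly σ M →ₗ[MvPolynomial σ R] InvPoly σ M' :=
  let coeffwise : InvPoly σ M →ₗ[R] InvPoly σ M' := Finsupp.mapRange.linearMap f
  { coeffwise with
    map_smul' b w := by
      change coeffwise (b • w) = b • coeffwise w
      induction b using MvPolynomial.induction_on' with
      | monomial β r =>
        rw [monomial_smul, monomial_smul, _root_.map_smul]
        exact congrArg (r • ·) (ext fun _ => rfl)
      | add p q hp hq => rw [add_smul, add_smul, map_add, hp, hq] }

@[simp] lemma map_apply (f : M →ₗ[R] M') (w : InvPoly σ M) (α : σ →₀ ℕ) :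
    map σ f w α = f (w α) := rfl

lemma map_smul_id (r : R) :
    map σ (r • LinearMap.id : M →ₗ[R] M) = (C r : MvPolynomial σ R) • LinearMap.id := by
  ext w α
  simp [C_smul]

lemma map_injective {f : M →ₗ[R] M'} (hf : Function.Injective f) : Function.Injective (map σ f) :=
  fun _ _ h => ext fun α => hf (DFunLike.congr_fun h α)

lemma map_surjective {f : M →ₗ[R] M'} (hf : Function.Surjective f) :
    Function.Surjective (map σ f) :=
  Finsupp.mapRange_surjective f (map_zero f) hf

lemma map_exact {f : M →ₗ[R] M'} {g : M' →ₗ[R] M''} (hf : Function.Injective f)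
    (h : Function.Exact f g) : Function.Exact (map σ f) (map σ g) := by
  refine fun w => ⟨fun hw => ?_, ?_⟩
  · have hw : w ∈ LinearMap.ker (Finsupp.mapRange.linearMap (α := σ →₀ ℕ) g) := hw
    rw [Finsupp.ker_mapRange, h.linearMap_ker_eq, ← Finsupp.range_mapRange_linearMap f
      (LinearMap.ker_eq_bot.2 hf)] at hw
    exact hw
  · rintro ⟨w, rfl⟩
    exact ext fun α => h.apply_apply_eq_zero (w α)

end

end InvPoly

/-! ### Local cohomology -/

section LocalCohomology

open MvPolynomial (X C)

noncomputable section

variable {R : Type*} [CommRing R] {n : ℕ} (x : Fin n → R)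
variable {M M' M'' : Type*} [AddCommGroup M] [Module R M] [AddCommGroup M'] [Module R M']
  [AddCommGroup M''] [Module R M'']

/-- The elements `x j - X j` of the polynomial ring, whose Koszul homology on the inverse
polynomials over `M` is the local cohomology of `M`. -/
def par : Fin n → MvPolynomial (Fin n) R := fun j => C (x j) - X j

lemma par_smul (j : Fin n) (w : InvPoly (Fin n) M) :
    par x j • w = x j • w - (X j : MvPolynomial (Fin n) R) • w := by
  rw [par, sub_smul, InvPoly.C_smul]

/-- A model of the local cohomology `H^{n - p}` of `M` with respect to the ideal `(x)`: the Koszul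
homology of the elements `x j - X j` on the inverse polynomials over `M`. -/
abbrev LC (p : ℕ) (M : Type*) [AddCommGroup M] [Module R M] :=
  Koszul.H (par x) (InvPoly (Fin n) M) p

namespace LC

/-- The map of local cohomology induced by a map of modules. -/
def map (p : ℕ) (f : M →ₗ[R] M') : LC x p M →ₗ[MvPolynomial (Fin n) R] LC x p M' :=
  Koszul.map (par x) p (InvPoly.map (Fin n) f)

lemma map_smul_id (p : ℕ) (r : R) :
    map x p (r • LinearMap.id : M →ₗ[R] M) = (C r : MvPolynomial (Fin n) R) • LinearMap.id := by
  rw [map, InvPoly.map_smul_id, Koszul.map_smul_id]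

lemma map_exact (p : ℕ) {f : M →ₗ[R] M'} {g : M' →ₗ[R] M''} (hf : Function.Injective f)
    (hg : Function.Surjective g) (hfg : Function.Exact f g) :
    Function.Exact (map x p f) (map x p g) :=
  Koszul.map_exact _ p (InvPoly.map_injective hf) (InvPoly.map_surjective hg)
    (InvPoly.map_exact hf hfg)

lemma exists_exact_map_connecting (p : ℕ) {f : M →ₗ[R] M'} {g : M' →ₗ[R] M''}
    (hf : Function.Injective f) (hg : Function.Surjective g) (hfg : Function.Exact f g) :
    ∃ δ : LC x (p + 1) M'' →ₗ[MvPolynomial (Fin n) R] LC x p M,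
      Function.Exact (map x (p + 1) g) δ ∧ Function.Exact δ (map x p f) :=
  Koszul.exists_exact_map_connecting _ p (InvPoly.map_injective hf) (InvPoly.map_surjective hg)
    (InvPoly.map_exact hf hfg)

lemma map_zero_surjective {g : M' →ₗ[R] M''} (hg : Function.Surjective g) :
    Function.Surjective (map x 0 g) :=
  Koszul.map_zero_surjective _ (InvPoly.map_surjective hg)

lemma subsingleton_of_subsingleton (p : ℕ) [Subsingleton M] : Subsingleton (LC x p M) :=
  have : Subsingleton (InvPoly (Fin n) M) := ⟨fun _ _ => InvPoly.ext fun _ => Subsingleton.elim _ _⟩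
  Koszul.subsingleton_of_subsingleton _ p

lemma subsingleton_of_lt {p : ℕ} (hp : n < p) : Subsingleton (LC x p M) :=
  Koszul.subsingleton_of_card_lt _ (by rwa [Fintype.card_fin])

lemma monomial_smul (p : ℕ) (γ : Fin n →₀ ℕ) (h : LC x p M) :
    (MvPolynomial.monomial γ 1 : MvPolynomial (Fin n) R) • h =
      (C (∏ j, x j ^ γ j) : MvPolynomial (Fin n) R) • h := by
  refine sub_eq_zero.1 ((sub_smul _ _ h).symm.trans ?_)
  refine Module.mem_annihilator.1 (Koszul.span_range_le_annihilator (par x) p ?_) h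
  rw [← neg_mem_iff, neg_sub, ← Ideal.Quotient.eq, MvPolynomial.monomial_eq, MvPolynomial.C_1,
    one_mul, Finsupp.prod_fintype _ _ (by simp)]
  simp only [map_prod, map_pow]
  refine Finset.prod_congr rfl fun j _ => congrArg (· ^ γ j) (Ideal.Quotient.eq.2 ?_)
  exact Ideal.subset_span ⟨j, rfl⟩

lemma X_pow_smul (p : ℕ) (j : Fin n) (k : ℕ) (h : LC x p M) :
    (X j ^ k : MvPolynomial (Fin n) R) • h = (C (x j) ^ k : MvPolynomial (Fin n) R) • h := by
  rw [MvPolynomial.X_pow_eq_monomial, monomial_smul, ← map_pow]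
  congr 2
  simp [Finsupp.single_apply]

/-- `X j` is nilpotent on each inverse polynomial, and it acts as `x j` on homology. -/
lemma exists_C_pow_smul_eq_zero (p : ℕ) {r : R} (hr : r ∈ (Ideal.span (Set.range x)).radical)
    (h : LC x p M) : ∃ k, (C r ^ k : MvPolynomial (Fin n) R) • h = 0 := by
  let I : Ideal R := (Ideal.torsionOf (MvPolynomial (Fin n) R) (LC x p M) h).comap C
  have hx (j : Fin n) : x j ∈ I.radical := by
    obtain ⟨k, hk⟩ := Koszul.exists_pow_smul_eq_zero (par x) p (X j : MvPolynomial (Fin n) R)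
      (InvPoly.exists_X_pow_smul_eq_zero j) h
    refine ⟨k, ?_⟩
    rwa [X_pow_smul, ← map_pow] at hk
  have hle : (Ideal.span (Set.range x)).radical ≤ I.radical := by
    rw [Ideal.radical_le_radical_iff, Ideal.span_le]
    rintro _ ⟨j, rfl⟩
    exact hx j
  obtain ⟨k, hk⟩ := hle hr
  exact ⟨k, by rw [← map_pow]; exact hk⟩

end LC

/-- Elements killed by a power of `x k` are in the image of `x k - X k`, by a finite geometric
series in the inverse variable. -/
lemma exists_par_smul_eq (k : Fin n) (K : ℕ) :
    ∀ u ∈ Koszul.initTorsion (par x) (InvPoly (Fin n) M) k, x k ^ K • u = 0 →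
      ∃ w ∈ Koszul.initTorsion (par x) (InvPoly (Fin n) M) k, par x k • w = u := by
  induction K with
  | zero =>
    intro u _ h
    exact ⟨0, zero_mem _, by rw [smul_zero, ← h, pow_zero, one_smul]⟩
  | succ K ih =>
    intro u hu h
    let u' : InvPoly (Fin n) M := InvPoly.mulInvX R k u
    have hu' : u' ∈ Koszul.initTorsion (par x) (InvPoly (Fin n) M) k := by
      rw [Koszul.mem_initTorsion] at hu ⊢
      intro i hi
      have hne : i ≠ k := by rintro rfl; exact lt_irrefl _ hi
      rw [par_smul, InvPoly.X_smul_mulInvX_of_ne hne, ← map_smul, ← map_sub, ← par_smul, hu i hi,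
        map_zero]
    have hxu' : x k • u' ∈ Koszul.initTorsion (par x) (InvPoly (Fin n) M) k := by
      rw [← InvPoly.C_smul]
      exact smul_mem _ _ hu'
    obtain ⟨w, hw, e⟩ := ih (x k • u') hxu' (by
      rw [smul_smul, ← pow_succ, ← map_smul, h, map_zero])
    refine ⟨w - u', sub_mem hw hu', ?_⟩
    rw [smul_sub, e, par_smul, InvPoly.X_smul_mulInvX, sub_sub_cancel]

variable {x}

lemma isCoregular_par (hx : ∀ j, x j ∈ (Module.annihilator R M).radical) :
    Koszul.IsCoregular (par x) (InvPoly (Fin n) M) := by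
  intro k u hu
  obtain ⟨K, hK⟩ := hx k
  exact exists_par_smul_eq x k K u hu (InvPoly.ext fun _ => Module.mem_annihilator.1 hK _)

lemma single_zero_mem_torsionBySet_par {m : M} (hm : ∀ j, x j • m = 0) :
    InvPoly.single R (0 : Fin n →₀ ℕ) m ∈
      torsionBySet (MvPolynomial (Fin n) R) (InvPoly (Fin n) M) (Set.range (par x)) := by
  rw [mem_torsionBySet_iff]
  rintro ⟨_, j, rfl⟩
  have hX : (X j : MvPolynomial (Fin n) R) • InvPoly.single R (0 : Fin n →₀ ℕ) m = 0 := by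
    simpa using InvPoly.X_pow_smul_single_eq_zero (R := R) (α := 0) (j := j) one_pos m
  rw [par_smul, hX, sub_zero, ← map_smul, hm, map_zero]

/-- On the inverse polynomials killed by all `x j - X j`, the coefficient at `α + e_j` is `x j`
times the coefficient at `α`. -/
lemma eq_zero_of_mem_torsionBySet_par {w : InvPoly (Fin n) M}
    (hw : w ∈ torsionBySet (MvPolynomial (Fin n) R) (InvPoly (Fin n) M) (Set.range (par x)))
    (h0 : w 0 = 0) : w = 0 := by
  have hsingle (j : Fin n) (α : Fin n →₀ ℕ) (hα : w α = 0) (k : ℕ) :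
      w (α + Finsupp.single j k) = 0 := by
    induction k with
    | zero => simpa using hα
    | succ k ih =>
      have hpar := (mem_torsionBySet_iff _ _).1 hw ⟨_, j, rfl⟩
      rw [par_smul, sub_eq_zero] at hpar
      rw [Finsupp.single_add, ← add_assoc, ← InvPoly.X_smul_apply (R := R), ← hpar,
        InvPoly.smul_apply, ih, smul_zero]
  ext α
  induction α using Finsupp.induction with
  | zero => exact h0
  | single_add j k α _ _ ih => rw [add_comm]; exact hsingle j α ih k

namespace LC

lemma subsingleton_of_mem_radical (hx : ∀ j, x j ∈ (Module.annihilator R M).radical) {p : ℕ}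
    (hp : p < n) : Subsingleton (LC x p M) :=
  (isCoregular_par hx).subsingleton hp

lemma not_subsingleton_of_mem_radical (hx : ∀ j, x j ∈ (Module.annihilator R M).radical) {m : M}
    (hm : m ≠ 0) (hxm : ∀ j, x j • m = 0) : ¬ Subsingleton (LC x n M) := by
  intro h
  obtain ⟨e⟩ := (isCoregular_par hx).nonempty_equiv_torsion
  have := e.symm.injective.subsingleton
  have hsingle : InvPoly.single R (0 : Fin n →₀ ℕ) m = 0 := congrArg Subtype.val
    (Subsingleton.elim (⟨_, single_zero_mem_torsionBySet_par hxm⟩ : torsionBySet _ _ _) 0)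
  rw [← InvPoly.single_apply_self (R := R) (0 : Fin n →₀ ℕ) m, hsingle, InvPoly.zero_apply] at hm
  exact hm rfl

/-- The only nonzero local cohomology embeds into `M` by taking constant coefficients. -/
lemma isArtinian_of_mem_radical [IsArtinian R M]
    (hx : ∀ j, x j ∈ (Module.annihilator R M).radical) (p : ℕ) :
    IsArtinian (MvPolynomial (Fin n) R) (LC x p M) := by
  rcases lt_trichotomy p n with hp | rfl | hp
  · have := subsingleton_of_mem_radical hx hp
    infer_instance
  · obtain ⟨e⟩ := (isCoregular_par hx).nonempty_equiv_torsion
    let coeffZero : torsionBySet (MvPolynomial (Fin p) R) (InvPoly (Fin p) M) (Set.range (par x))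
        →ₗ[R] M :=
      { toFun w := (w : InvPoly (Fin p) M) 0
        map_add' _ _ := rfl
        map_smul' _ _ := rfl }
    have hinj : Function.Injective coeffZero := (injective_iff_map_eq_zero _).2
      fun w h0 => Subtype.ext (eq_zero_of_mem_torsionBySet_par w.2 h0)
    have := isArtinian_of_tower (S := MvPolynomial (Fin p) R) R
      (isArtinian_of_injective coeffZero hinj)
    exact isArtinian_of_injective e.toLinearMap e.injective
  · have := subsingleton_of_lt (M := M) x hp
    infer_instance

end LC

variable (x) in
/-- The class of `m X ^ (-α)` in the top local cohomology stands for `m / ∏ x j ^ (α j + 1)`. -/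
lemma LC.ofCoeff_single_eq_zero {α : Fin n →₀ ℕ} {k : ℕ} (hα : ∀ j, α j < k) {m : M}
    (hm : m ∈ Ideal.span (Set.range fun j => x j ^ k) • (⊤ : Submodule R M)) :
    Koszul.ofCoeff (par x) (InvPoly.single R α m) = 0 := by
  let trivialCoeffs : Submodule R M :=
    ((LinearMap.ker (Koszul.ofCoeff (W := InvPoly (Fin n) M) (par x))).restrictScalars R).comap
      (InvPoly.single R α)
  suffices hle : Ideal.span (Set.range fun j => x j ^ k) • ⊤ ≤ trivialCoeffs from hle hm
  rw [span_smul_eq]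
  refine set_smul_le _ _ _ ?_
  rintro _ t ⟨j, rfl⟩ -
  change Koszul.ofCoeff (par x) (InvPoly.single R α (x j ^ k • t)) = 0
  rw [map_smul, ← InvPoly.C_smul, map_smul, map_pow, ← LC.X_pow_smul, ← map_smul,
    InvPoly.X_pow_smul_single_eq_zero (hα j), map_zero]

variable (x) in
lemma LC.subsingleton_zero_of_forall_exists_prod_smul_mem
    (H : ∀ a : ℕ, ∃ k : ℕ, ∀ m : M, (∏ j, x j ^ k) • m ∈
      Ideal.span (Set.range fun j => x j ^ (k + a)) • (⊤ : Submodule R M)) :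
    Subsingleton (LC x 0 M) := by
  have hsingle (α : Fin n →₀ ℕ) (m : M) :
      Koszul.ofCoeff (par x) (InvPoly.single R α m) = 0 := by
    let a := Finset.univ.sup α + 1
    have hα (j : Fin n) : α j < a := Nat.lt_succ_of_le (Finset.le_sup (Finset.mem_univ j))
    obtain ⟨k, hk⟩ := H a
    let γ : Fin n →₀ ℕ := Finsupp.equivFunOnFinite.symm fun j => k + (a - 1 - α j)
    have hαγ (j : Fin n) : (α + γ) j < k + a := by
      have := hα j
      change α j + (k + (a - 1 - α j)) < k + a
      omega
    have hγ : ∏ j, x j ^ γ j = (∏ j, x j ^ (a - 1 - α j)) * ∏ j, x j ^ k := by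
      rw [← Finset.prod_mul_distrib]
      exact Finset.prod_congr rfl fun j _ => by rw [← pow_add, add_comm]; rfl
    rw [← InvPoly.monomial_smul_single_add α γ m, map_smul, LC.monomial_smul, ← map_smul,
      InvPoly.C_smul, ← map_smul]
    refine LC.ofCoeff_single_eq_zero x hαγ ?_
    rw [hγ, mul_smul]
    exact smul_mem _ _ (hk m)
  refine subsingleton_of_forall_eq 0 fun h => ?_
  obtain ⟨w, rfl⟩ := Koszul.ofCoeff_surjective (par x) h
  exact InvPoly.induction_linear (R := R) w (map_zero _)
    (fun w w' hw hw' => by rw [map_add, hw, hw', add_zero]) hsingle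

end

end LocalCohomology

/-! ### Artinian modules -/

section Artinian

open Filter
open scoped Pointwise

lemma exists_forall_le_eq_of_antitone {α : Type*} [PartialOrder α] [WellFoundedLT α]
    {F : ℕ → ℕ → α} (hFi : ∀ k, Antitone fun i => F i k) (hFk : ∀ i, Antitone (F i)) :
    ∃ I, ∀ i, I ≤ i → ∀ k, F i k = F I k := by
  obtain ⟨⟨i₀, k₀⟩, -, hmin⟩ := wellFounded_lt.onFun (f := fun q : ℕ × ℕ => F q.1 q.2)
    |>.has_min Set.univ ⟨(0, 0), trivial⟩
  have hdiag (i k : ℕ) (hi : i₀ ≤ i) (hk : k₀ ≤ k) : F i k = F i₀ k₀ :=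
    ((hFi k hi).trans (hFk i₀ hk)).eq_of_not_lt (hmin (i, k) trivial)
  have hcol (k : ℕ) : ∀ᶠ I in atTop, ∀ i, I ≤ i → F i k = F I k := by
    obtain ⟨s, hs⟩ := WellFoundedGT.monotone_chain_condition (α := αᵒᵈ) ⟨_, (hFi k).dual_right⟩
    filter_upwards [eventually_ge_atTop s] with I hI i hi
    exact (hs i (hI.trans hi)).symm.trans (hs I hI)
  obtain ⟨I, hI, hI₀⟩ := (((eventually_all_finset (Finset.range k₀)).2 fun k _ => hcol k).and
    (eventually_ge_atTop i₀)).exists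
  refine ⟨I, fun i hi k => ?_⟩
  rcases lt_or_ge k k₀ with hk | hk
  · exact hI k (Finset.mem_range.2 hk) i hi
  · rw [hdiag i k (hI₀.trans hi) hk, hdiag I k hI₀ hk]

variable {A : Type*} [CommRing A] {T : Type*} [AddCommGroup T] [Module A T]

lemma antitone_pow_smul (a : A) (S : Submodule A T) : Antitone fun k : ℕ => a ^ k • S := by
  refine antitone_nat_of_succ_le fun k => ?_
  rw [pow_succ', mul_smul]
  exact smul_le_self_of_tower a _

lemma le_of_forall_pow_smul_inf_torsionBy_le {a : A} (hT : ∀ t : T, ∃ k, a ^ k • t = 0)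
    {N N' : Submodule A T} (hle : N' ≤ N)
    (h : ∀ k : ℕ, a ^ k • N ⊓ torsionBy A T a ≤ a ^ k • N') : N ≤ N' := by
  have htorsion (k : ℕ) : ∀ t ∈ N, a ^ k • t = 0 → t ∈ N' := by
    induction k with
    | zero =>
      intro t _ h0
      rw [pow_zero, one_smul] at h0
      exact h0 ▸ zero_mem _
    | succ k ih =>
      intro t ht h0
      rw [pow_succ', mul_smul] at h0
      obtain ⟨u, hu, hut⟩ := h k ⟨smul_mem_pointwise_smul _ _ _ ht, h0⟩
      have hsub : t - u ∈ N' := ih _ (sub_mem ht (hle hu)) (by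
        rw [smul_sub, sub_eq_zero]
        exact hut.symm)
      simpa using add_mem hsub hu
  exact fun t ht => (hT t).elim fun k hk => htorsion k t ht hk

/-- A descending chain `N i` is controlled by the submodules `a ^ k • N i ⊓ (0 : a)`. -/
theorem isArtinian_of_torsionBy (a : A) (hT : ∀ t : T, ∃ k, a ^ k • t = 0)
    [IsArtinian A (torsionBy A T a)] : IsArtinian A T := by
  rw [← monotone_stabilizes_iff_artinian]
  intro N
  let F (i k : ℕ) : Submodule A (torsionBy A T a) :=
    (a ^ k • OrderDual.ofDual (N i)).comap (torsionBy A T a).subtype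
  have hFi (k : ℕ) : Antitone fun i => F i k := fun i j hij =>
    comap_mono (smul_mono_right (a ^ k) (N.monotone hij))
  have hFk (i : ℕ) : Antitone (F i) := fun k l hkl => comap_mono (antitone_pow_smul a _ hkl)
  obtain ⟨I, hI⟩ := exists_forall_le_eq_of_antitone hFi hFk
  refine ⟨I, fun i hi => le_antisymm (N.monotone hi) ?_⟩
  refine le_of_forall_pow_smul_inf_torsionBy_le hT (N.monotone hi) fun k t ht => ?_
  have hmem : (⟨t, ht.2⟩ : torsionBy A T a) ∈ F I k := ht.1
  rwa [← hI i hi k] at hmem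

end Artinian

section AttachedPrimes

open scoped Pointwise

variable {A : Type*} [CommRing A] {T : Type*} [AddCommGroup T] [Module A T]

/-- `F` is a finite set of primes containing the attached primes of `S`. Secondary representations
are avoided by the following encoding: if `y` lies in each prime of `F` that contains `x`, then a
power of `y` maps `S` into `x • S`. -/
structure ControlsAttachedPrimes (F : Set (Ideal A)) (S : Submodule A T) : Prop where
  finite : F.Finite
  isPrime : ∀ P ∈ F, P.IsPrime
  exists_pow_smul_le : ∀ x y : A, (∀ P ∈ F, x ∈ P → y ∈ P) → ∃ k : ℕ, y ^ k • S ≤ x • S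

lemma controlsAttachedPrimes_empty_bot : ControlsAttachedPrimes ∅ (⊥ : Submodule A T) where
  finite := Set.finite_empty
  isPrime := by simp
  exists_pow_smul_le x y _ := ⟨0, by simp⟩

lemma mem_radical_annihilator_iff {S : Submodule A T} {s : A} :
    s ∈ S.annihilator.radical ↔ ∃ k : ℕ, s ^ k • S = ⊥ := by
  simp only [Ideal.mem_radical_iff, mem_annihilator, eq_bot_iff]
  refine exists_congr fun k => ⟨fun h => ?_, fun h t ht => ?_⟩
  · rintro _ ⟨t, ht, rfl⟩
    exact h t ht
  · exact h (smul_mem_pointwise_smul t (s ^ k) S ht)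

lemma pow_smul_eq_self {S : Submodule A T} {s : A} (hs : s • S = S) (k : ℕ) : s ^ k • S = S := by
  induction k with
  | zero => rw [pow_zero, one_smul]
  | succ k ih => rw [pow_succ, mul_smul, hs, ih]

lemma controlsAttachedPrimes_singleton_of_secondary {S : Submodule A T} (hS : S ≠ ⊥)
    (hsec : ∀ s : A, s • S = S ∨ ∃ k : ℕ, s ^ k • S = ⊥) :
    ControlsAttachedPrimes {S.annihilator.radical} S := by
  have hsurj (s : A) (hs : s ∉ S.annihilator.radical) : s • S = S :=
    (hsec s).resolve_right (mt mem_radical_annihilator_iff.2 hs)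
  refine ⟨Set.finite_singleton _, ?_, fun x y hxy => ?_⟩
  · rintro _ rfl
    refine ⟨fun h => ?_, fun {x y} hxy => or_iff_not_imp_left.2 fun hx => ?_⟩
    · obtain ⟨k, hk⟩ := mem_radical_annihilator_iff.1 ((Ideal.eq_top_iff_one _).1 h)
      exact hS (by rwa [one_pow, one_smul] at hk)
    · obtain ⟨k, hk⟩ := mem_radical_annihilator_iff.1 hxy
      refine mem_radical_annihilator_iff.2 ⟨k, ?_⟩
      rwa [mul_comm, mul_pow, mul_smul, pow_smul_eq_self (hsurj x hx)] at hk
  · by_cases hx : x ∈ S.annihilator.radical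
    · obtain ⟨k, hk⟩ := mem_radical_annihilator_iff.1 (hxy _ rfl hx)
      exact ⟨k, hk.le.trans bot_le⟩
    · exact ⟨0, by rw [pow_zero, one_smul, hsurj x hx]⟩

lemma ControlsAttachedPrimes.sup {F₁ F₂ : Set (Ideal A)} {S₁ S₂ : Submodule A T}
    (h₁ : ControlsAttachedPrimes F₁ S₁) (h₂ : ControlsAttachedPrimes F₂ S₂) :
    ControlsAttachedPrimes (F₁ ∪ F₂) (S₁ ⊔ S₂) := by
  refine ⟨h₁.finite.union h₂.finite, fun P hP => hP.elim (h₁.isPrime P) (h₂.isPrime P),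
    fun x y hxy => ?_⟩
  obtain ⟨k, hk⟩ := h₁.exists_pow_smul_le x y fun P hP => hxy P (.inl hP)
  obtain ⟨l, hl⟩ := h₂.exists_pow_smul_le x y fun P hP => hxy P (.inr hP)
  refine ⟨k + l, ?_⟩
  rw [smul_sup', smul_sup']
  exact sup_le_sup ((antitone_pow_smul y S₁ (Nat.le_add_right k l)).trans hk)
    ((antitone_pow_smul y S₂ (Nat.le_add_left l k)).trans hl)

/-- Fitting's decomposition for the multiplication by `s`. -/
lemma exists_lt_lt_sup_eq [IsArtinian A T] {S : Submodule A T} {s : A} (hs : s • S ≠ S)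
    (hs' : ∀ k : ℕ, s ^ k • S ≠ ⊥) : ∃ S₁ < S, ∃ S₂ < S, S₁ ⊔ S₂ = S := by
  let f : Module.End A S := LinearMap.lsmul A S s
  obtain ⟨k, hk, hk₁⟩ := (f.eventually_codisjoint_ker_pow_range_pow.and
    (Filter.eventually_ge_atTop 1)).exists
  have hfk (t : S) : ((f ^ k) t : T) = s ^ k • (t : T) := by
    rw [show f = algebraMap A _ s from rfl, ← map_pow]
    rfl
  have hle : s ^ k • S ≤ S := smul_le_self_of_tower _ S
  refine ⟨s ^ k • S, hle.lt_of_ne fun h => hs ?_, S ⊓ torsionBy A T (s ^ k),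
    inf_le_left.lt_of_ne fun h => hs' k ?_, le_antisymm (sup_le hle inf_le_left) fun t ht => ?_⟩
  · refine le_antisymm (smul_le_self_of_tower _ S) ?_
    simpa only [h, pow_one] using antitone_pow_smul s S hk₁
  · rw [eq_bot_iff]
    rintro _ ⟨t, ht, rfl⟩
    exact inf_eq_left.1 h ht
  · obtain ⟨u, hu, _, ⟨w, rfl⟩, huw⟩ := mem_sup.1 (hk.eq_top ▸ mem_top (x := (⟨t, ht⟩ : S)))
    have htuw : s ^ k • (w : T) + u = t := by
      rw [← hfk, add_comm]
      exact congrArg Subtype.val huw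
    rw [← htuw]
    exact add_mem_sup (smul_mem_pointwise_smul _ _ _ w.2)
      ⟨u.2, (hfk u).symm.trans (congrArg Subtype.val hu)⟩

theorem exists_controlsAttachedPrimes [IsArtinian A T] (S : Submodule A T) :
    ∃ F : Set (Ideal A), ControlsAttachedPrimes F S := by
  induction S using WellFoundedLT.induction with
  | ind S ih =>
    by_cases hS : S = ⊥
    · exact ⟨∅, hS ▸ controlsAttachedPrimes_empty_bot⟩
    by_cases hsec : ∀ s : A, s • S = S ∨ ∃ k : ℕ, s ^ k • S = ⊥
    · exact ⟨_, controlsAttachedPrimes_singleton_of_secondary hS hsec⟩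
    push Not at hsec
    obtain ⟨s, hs, hs'⟩ := hsec
    obtain ⟨S₁, h₁, S₂, h₂, rfl⟩ := exists_lt_lt_sup_eq hs hs'
    obtain ⟨F₁, hF₁⟩ := ih S₁ h₁
    obtain ⟨F₂, hF₂⟩ := ih S₂ h₂
    exact ⟨F₁ ∪ F₂, hF₁.sup hF₂⟩

end AttachedPrimes

/-! ### Dévissage over a local ring -/

section Devissage

lemma isArtinian_comap_mkQ {R M : Type*} [Ring R] [AddCommGroup M] [Module R M]
    (N : Submodule R M) (P : Submodule R (M ⧸ N)) [IsArtinian R N] [IsArtinian R P] :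
    IsArtinian R (P.comap N.mkQ) := by
  have hle : N ≤ P.comap N.mkQ := fun t ht => by simp [(Quotient.mk_eq_zero N).2 ht]
  refine isArtinian_of_range_eq_ker (inclusion hle) (N.mkQ.submoduleComap P) ?_
  ext t
  rw [range_inclusion, mem_comap, LinearMap.mem_ker, ← Subtype.coe_inj]
  exact (Quotient.mk_eq_zero N).symm

variable {R : Type*} [CommRing R] [IsLocalRing R]

lemma maximalIdeal_le_radical_annihilator_of_isArtinian (M : Type*) [AddCommGroup M] [Module R M]
    [Module.Finite R M] [IsArtinian R M] :
    maximalIdeal R ≤ (Module.annihilator R M).radical := by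
  intro r hr
  obtain ⟨k, hk⟩ := IsArtinian.range_smul_pow_stabilizes M r
  have hle : LinearMap.range (r ^ k • LinearMap.id : M →ₗ[R] M) ≤
      maximalIdeal R • LinearMap.range (r ^ k • LinearMap.id : M →ₗ[R] M) := by
    conv_lhs => rw [hk (k + 1) k.le_succ]
    rintro _ ⟨t, rfl⟩
    rw [pow_succ', mul_smul]
    exact smul_mem_smul hr ⟨t, rfl⟩
  have hbot := eq_bot_of_le_smul_of_le_jacobson_bot _ _
    (Module.Finite.iff_fg.1 inferInstance) hle (maximalIdeal_le_jacobson _)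
  exact ⟨k, Module.mem_annihilator.2 fun t => LinearMap.congr_fun (LinearMap.range_eq_bot.1 hbot) t⟩

lemma support_subset_of_isArtinian (M : Type*) [AddCommGroup M] [Module R M]
    [Module.Finite R M] [IsArtinian R M] : Module.support R M ⊆ {closedPoint R} := by
  intro P hP
  have hle : maximalIdeal R ≤ P.asIdeal :=
    (maximalIdeal_le_radical_annihilator_of_isArtinian M).trans
      (P.2.radical_le_iff.2 (Module.annihilator_le_of_mem_support hP))
  exact PrimeSpectrum.ext (le_antisymm (le_maximalIdeal P.2.ne_top) hle)

lemma supportDim_eq_zero_of_isArtinian (M : Type*) [AddCommGroup M] [Module R M]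
    [Module.Finite R M] [IsArtinian R M] [Nontrivial M] : Module.supportDim R M = 0 :=
  have : Subsingleton (Module.support R M) :=
    Set.subsingleton_coe _ |>.2 (Set.subsingleton_singleton.anti (support_subset_of_isArtinian M))
  have : Nonempty (Module.support R M) := Module.nonempty_support_of_nontrivial.to_subtype
  Order.krullDim_eq_zero

variable [IsNoetherianRing R]

lemma exists_ne_zero_forall_maximalIdeal_smul_eq_zero (M : Type*) [AddCommGroup M] [Module R M]
    [Module.Finite R M] [IsArtinian R M] [Nontrivial M] :
    ∃ m : M, m ≠ 0 ∧ ∀ r ∈ maximalIdeal R, r • m = 0 := by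
  obtain ⟨P, hP⟩ := associatedPrimes.nonempty R M
  obtain ⟨hPprime, m, hm⟩ := isAssociatedPrime_iff.1 hP
  refine ⟨m, ?_, fun r hr => ?_⟩
  · rintro rfl
    exact hPprime.ne_top (hm ▸ by ext; simp)
  · have hrP : r ∈ P := hPprime.radical_le_iff.2
      (annihilator_top (R := R) (M := M) ▸ hP.annihilator_le)
      (maximalIdeal_le_radical_annihilator_of_isArtinian M hr)
    simpa [hm] using hrP

lemma supportDim_quotient_eq_of_isArtinian {M : Type*} [AddCommGroup M] [Module R M]
    [Module.Finite R M] (N : Submodule R M) [IsArtinian R N] [Nontrivial (M ⧸ N)] :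
    Module.supportDim R (M ⧸ N) = Module.supportDim R M := by
  rw [Module.supportDim, Module.supportDim, Module.support_of_exact
    (LinearMap.exact_subtype_mkQ N) N.injective_subtype N.mkQ_surjective,
    Set.union_eq_self_of_subset_left ((support_subset_of_isArtinian N).trans
      (Set.singleton_subset_iff.2 (closedPoint_mem_support R (M ⧸ N))))]

lemma exists_isArtinian_maximalIdeal_notMem_associatedPrimes (M : Type*) [AddCommGroup M]
    [Module R M] [Module.Finite R M] :
    ∃ N : Submodule R M, IsArtinian R N ∧ maximalIdeal R ∉ associatedPrimes R (M ⧸ N) := by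
  obtain ⟨N, hN : IsArtinian R N, hmax⟩ := (wellFounded_gt (α := Submodule R M)).has_min
    {N | IsArtinian R N} ⟨⊥, inferInstanceAs (IsArtinian R (⊥ : Submodule R M))⟩
  refine ⟨N, hN, fun hm => ?_⟩
  obtain ⟨f, hf⟩ := ((isAssociatedPrime_iff_exists_injective_linearMap _ _).1 hm).2
  have : IsSimpleModule R (R ⧸ maximalIdeal R) :=
    isSimpleModule_iff_isCoatom.2 (maximalIdeal.isMaximal R).out
  obtain ⟨t, ht⟩ := N.mkQ_surjective (f 1)
  have htN : t ∉ N := fun h => one_ne_zero (hf (by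
    rw [← ht, map_zero]; exact (Quotient.mk_eq_zero N).2 h))
  refine hmax _ (isArtinian_comap_mkQ N (LinearMap.range f)) (lt_of_le_of_ne ?_ fun h => htN ?_)
  · exact fun s hs => by simp [(Quotient.mk_eq_zero N).2 hs]
  · rw [h, mem_comap, ht]
    exact LinearMap.mem_range_self f 1

lemma exists_isSMulRegular_forall_notMem {M : Type*} [AddCommGroup M] [Module R M]
    [Module.Finite R M] (hM : maximalIdeal R ∉ associatedPrimes R M) {F : Set (Ideal R)}
    (hF : F.Finite) (hFp : ∀ P ∈ F, P.IsPrime) (hFm : maximalIdeal R ∉ F) :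
    ∃ r ∈ maximalIdeal R, IsSMulRegular M r ∧ ∀ P ∈ F, r ∉ P := by
  have hprime : ∀ P ∈ associatedPrimes R M ∪ F, P.IsPrime := fun P hP =>
    hP.elim IsAssociatedPrime.isPrime (hFp P)
  by_contra! h
  have hsub : (maximalIdeal R : Set R) ⊆ ⋃ P ∈ associatedPrimes R M ∪ F, (P : Set R) := by
    intro r hr
    rw [Set.biUnion_union, biUnion_associatedPrimes_eq_compl_regular]
    refine or_iff_not_imp_left.2 fun hreg => ?_
    obtain ⟨P, hP, hrP⟩ := h r hr (not_not.1 hreg)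
    exact Set.mem_biUnion hP hrP
  obtain ⟨P, hP, hle⟩ := (Ideal.subset_union_prime_finite (f := id)
    ((associatedPrimes.finite R M).union hF) ⊥ ⊥ fun P hP _ _ => hprime P hP).1 hsub
  obtain rfl : maximalIdeal R = P := (maximalIdeal.isMaximal R).eq_of_le (hprime P hP).ne_top hle
  exact hP.elim hM hFm

universe u in
theorem devissage_induction {motive : ∀ (M : Type u) [AddCommGroup M] [Module R M], Prop}
    (artinian : ∀ (M : Type u) [AddCommGroup M] [Module R M] [Module.Finite R M] [IsArtinian R M],
      motive M)
    (quotient : ∀ (M : Type u) [AddCommGroup M] [Module R M] [Module.Finite R M]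
      (N : Submodule R M) [IsArtinian R N] [Nontrivial (M ⧸ N)], motive (M ⧸ N) → motive M)
    (regular : ∀ (M : Type u) [AddCommGroup M] [Module R M] [Module.Finite R M],
      maximalIdeal R ∉ associatedPrimes R M →
      (∀ r ∈ maximalIdeal R, IsSMulRegular M r → motive (QuotSMulTop r M)) → motive M)
    (M : Type u) [AddCommGroup M] [Module R M] [Module.Finite R M] : motive M := by
  obtain ⟨e, he⟩ : ∃ e : ℕ, Module.supportDim R M < e := by
    by_contra! h
    exact ringKrullDim_ne_top (top_unique
      (ENat.WithBot.eq_top_iff_forall_ge.2 h ▸ Module.supportDim_le_ringKrullDim R M))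
  induction e generalizing M with
  | zero =>
    have : Subsingleton M :=
      (Module.supportDim_eq_bot_iff_subsingleton R M).1 (WithBot.lt_coe_bot.1 he)
    exact artinian M
  | succ e ih =>
    obtain ⟨N, hN, hM⟩ := exists_isArtinian_maximalIdeal_notMem_associatedPrimes (R := R) M
    rcases subsingleton_or_nontrivial (M ⧸ N) with hMN | hMN
    · have := (isArtinian_iff_submodule_quotient N).2 ⟨hN, inferInstance⟩
      exact artinian M
    refine quotient M N (regular _ hM fun r hr hreg => ih _ ?_)
    rw [← ENat.WithBot.add_one_le_natCast_iff,
      Module.supportDim_quotSMulTop_succ_eq_supportDim hreg hr,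
      supportDim_quotient_eq_of_isArtinian]
    exact ENat.WithBot.lt_add_one_iff.1 he

end Devissage

/-! ### Vanishing, Artinianness and non-vanishing of local cohomology -/

section LocalRing

open MvPolynomial (C)
open scoped Pointwise

variable {R : Type*} [CommRing R] {n : ℕ} (x : Fin n → R)
  {M : Type*} [AddCommGroup M] [Module R M]

lemma exact_smul_id_mkQ (r : R) :
    Function.Exact (r • LinearMap.id : M →ₗ[R] M) (mkQ (r • (⊤ : Submodule R M))) := by
  intro t
  rw [mkQ_apply, Quotient.mk_eq_zero, mem_smul_pointwise_iff_exists]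
  simp

lemma le_supportDim_add [Nontrivial M] (p : WithBot ℕ∞) : p ≤ Module.supportDim R M + p :=
  le_add_of_nonneg_left
    (Order.krullDim_nonneg_iff.2 Module.nonempty_support_of_nontrivial.to_subtype)

namespace LC

lemma exists_exact_of_isSMulRegular {r : R} (hr : IsSMulRegular M r) (p : ℕ) :
    ∃ δ : LC x (p + 1) (QuotSMulTop r M) →ₗ[MvPolynomial (Fin n) R] LC x p M,
      Function.Exact (map x (p + 1) (mkQ (r • (⊤ : Submodule R M)))) δ ∧
        LinearMap.range δ = torsionBy (MvPolynomial (Fin n) R) (LC x p M) (C r) := by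
  have hinj : Function.Injective (r • LinearMap.id : M →ₗ[R] M) := hr
  obtain ⟨δ, hδ, hδr⟩ := exists_exact_map_connecting x p hinj (mkQ_surjective _)
    (exact_smul_id_mkQ r)
  refine ⟨δ, hδ, ?_⟩
  rw [← LinearMap.exact_iff.1 hδr, map_smul_id]
  rfl

lemma map_mkQ_surjective_of_isSMulRegular {r : R} (hr : IsSMulRegular M r) (p : ℕ)
    [Subsingleton (LC x p M)] :
    Function.Surjective (map x (p + 1) (mkQ (r • (⊤ : Submodule R M)))) := by
  obtain ⟨δ, hδ, -⟩ := exists_exact_of_isSMulRegular x hr p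
  exact fun h => (hδ h).1 (Subsingleton.elim _ _)

lemma map_mkQ_eq_zero_iff {r : R} (hr : IsSMulRegular M r) {p : ℕ} {h : LC x p M} :
    map x p (mkQ (r • (⊤ : Submodule R M))) h = 0 ↔
      ∃ u : LC x p M, (C r : MvPolynomial (Fin n) R) • u = h := by
  have hinj : Function.Injective (r • LinearMap.id : M →ₗ[R] M) := hr
  rw [map_exact x p hinj (mkQ_surjective _) (exact_smul_id_mkQ r) h, map_smul_id]
  rfl

variable {x}

lemma subsingleton_of_isSMulRegular {r : R} (hr : IsSMulRegular M r)
    (hrx : r ∈ (Ideal.span (Set.range x)).radical) {p : ℕ}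
    [Subsingleton (LC x (p + 1) (QuotSMulTop r M))] : Subsingleton (LC x p M) := by
  obtain ⟨δ, -, hδ⟩ := exists_exact_of_isSMulRegular x hr p
  have hinj : IsSMulRegular (LC x p M) (C r : MvPolynomial (Fin n) R) := by
    rw [isSMulRegular_iff_torsionBy_eq_bot, ← hδ, Subsingleton.elim δ 0, LinearMap.range_zero]
  refine subsingleton_of_forall_eq 0 fun h => ?_
  obtain ⟨k, hk⟩ := exists_C_pow_smul_eq_zero x p hrx h
  exact (hinj.pow k).right_eq_zero_of_smul hk

lemma isArtinian_of_isSMulRegular {r : R} (hr : IsSMulRegular M r)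
    (hrx : r ∈ (Ideal.span (Set.range x)).radical) {p : ℕ}
    [IsArtinian (MvPolynomial (Fin n) R) (LC x (p + 1) (QuotSMulTop r M))] :
    IsArtinian (MvPolynomial (Fin n) R) (LC x p M) := by
  obtain ⟨δ, -, hδ⟩ := exists_exact_of_isSMulRegular x hr p
  have : IsArtinian (MvPolynomial (Fin n) R)
      (torsionBy (MvPolynomial (Fin n) R) (LC x p M) (C r)) := hδ ▸ inferInstance
  exact isArtinian_of_torsionBy (C r) (exists_C_pow_smul_eq_zero x p hrx)

variable [IsLocalRing R] [IsNoetherianRing R] [Module.Finite R M]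

section Quotient

variable (hx : ∀ j, x j ∈ maximalIdeal R) (N : Submodule R M) [IsArtinian R N]
include hx

lemma subsingleton_of_quotient {p : ℕ} (hp : p < n) [Subsingleton (LC x p (M ⧸ N))] :
    Subsingleton (LC x p M) := by
  have : Subsingleton (LC x p N) := subsingleton_of_mem_radical
    (fun j => maximalIdeal_le_radical_annihilator_of_isArtinian N (hx j)) hp
  refine subsingleton_of_forall_eq 0 fun t => ?_
  obtain ⟨s, rfl⟩ := (map_exact x p N.injective_subtype N.mkQ_surjective
    (LinearMap.exact_subtype_mkQ N) t).1 (Subsingleton.elim _ _)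
  rw [Subsingleton.elim s 0, _root_.map_zero]

lemma map_mkQ_surjective_of_isArtinian {p : ℕ} (hp : p ≤ n) :
    Function.Surjective (map x p N.mkQ) := by
  cases p with
  | zero => exact map_zero_surjective x N.mkQ_surjective
  | succ p =>
    have : Subsingleton (LC x p N) := subsingleton_of_mem_radical
      (fun j => maximalIdeal_le_radical_annihilator_of_isArtinian N (hx j)) hp
    obtain ⟨δ, hδ, -⟩ := exists_exact_map_connecting x p N.injective_subtype N.mkQ_surjective
      (LinearMap.exact_subtype_mkQ N)
    exact fun t => (hδ t).1 (Subsingleton.elim _ _)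

end Quotient

variable (M) (hx : ∀ j, x j ∈ maximalIdeal R)
  (hrad : maximalIdeal R ≤ (Ideal.span (Set.range x)).radical)
include hx hrad

theorem subsingleton_of_supportDim_add_lt {p : ℕ} (hp : Module.supportDim R M + p < n) :
    Subsingleton (LC x p M) := by
  refine devissage_induction (R := R) (motive := fun M _ _ =>
    ∀ p : ℕ, Module.supportDim R M + p < n → Subsingleton (LC x p M)) ?_ ?_ ?_ M p hp
  · intro M _ _ _ _ p hp
    rcases subsingleton_or_nontrivial M with hM | hM
    · exact subsingleton_of_subsingleton x p
    rw [supportDim_eq_zero_of_isArtinian, zero_add, Nat.cast_lt] at hp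
    exact subsingleton_of_mem_radical
      (fun j => maximalIdeal_le_radical_annihilator_of_isArtinian M (hx j)) hp
  · intro M _ _ _ N _ _ ih p hp
    rw [← supportDim_quotient_eq_of_isArtinian N] at hp
    have := ih p hp
    exact subsingleton_of_quotient hx N (Nat.cast_lt.1 ((le_supportDim_add _).trans_lt hp))
  · intro M _ _ _ hM ih p hp
    obtain ⟨r, hr, hreg, -⟩ := exists_isSMulRegular_forall_notMem hM Set.finite_empty
      (by simp) (Set.notMem_empty _)
    have := ih r hr hreg (p + 1) (by
      rwa [Nat.cast_add_one, add_comm (p : WithBot ℕ∞), ← add_assoc,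
        Module.supportDim_quotSMulTop_succ_eq_supportDim hreg hr])
    exact subsingleton_of_isSMulRegular hreg (hrad hr)

theorem isArtinian (p : ℕ) : IsArtinian (MvPolynomial (Fin n) R) (LC x p M) := by
  refine devissage_induction (R := R) (motive := fun M _ _ =>
    ∀ p : ℕ, IsArtinian (MvPolynomial (Fin n) R) (LC x p M)) ?_ ?_ ?_ M p
  · intro M _ _ _ _ p
    exact isArtinian_of_mem_radical
      (fun j => maximalIdeal_le_radical_annihilator_of_isArtinian M (hx j)) p
  · intro M _ _ _ N _ _ ih p
    have := ih p
    have := isArtinian_of_mem_radical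
      (fun j => maximalIdeal_le_radical_annihilator_of_isArtinian N (hx j)) p
    exact isArtinian_of_range_eq_ker (map x p N.subtype) (map x p N.mkQ)
      (LinearMap.exact_iff.1 (map_exact x p N.injective_subtype N.mkQ_surjective
        (LinearMap.exact_subtype_mkQ N))).symm
  · intro M _ _ _ hM ih p
    obtain ⟨r, hr, hreg, -⟩ := exists_isSMulRegular_forall_notMem hM Set.finite_empty
      (by simp) (Set.notMem_empty _)
    have := ih r hr hreg (p + 1)
    exact isArtinian_of_isSMulRegular hreg (hrad hr)

lemma subsingleton_of_forall_exists_pow_smul_eq_zero {p : ℕ} (hpn : p < n)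
    (hp : Module.supportDim R M + p ≤ n)
    (hnil : ∀ r ∈ maximalIdeal R, ∃ k, ∀ h : LC x p M,
      (C r : MvPolynomial (Fin n) R) ^ k • h = 0) : Subsingleton (LC x p M) := by
  refine devissage_induction (R := R) (motive := fun M _ _ => Module.supportDim R M + p ≤ n →
    (∀ r ∈ maximalIdeal R, ∃ k, ∀ h : LC x p M, (C r : MvPolynomial (Fin n) R) ^ k • h = 0) →
    Subsingleton (LC x p M)) ?_ ?_ ?_ M hp hnil
  · intro M _ _ _ _ _ _
    exact subsingleton_of_mem_radical
      (fun j => maximalIdeal_le_radical_annihilator_of_isArtinian M (hx j)) hpn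
  · intro M _ _ _ N _ _ ih hp hnil
    have := ih (by rwa [supportDim_quotient_eq_of_isArtinian]) fun r hr => by
      obtain ⟨k, hk⟩ := hnil r hr
      refine ⟨k, fun h => ?_⟩
      obtain ⟨h, rfl⟩ := map_mkQ_surjective_of_isArtinian hx N hpn.le h
      rw [← map_smul, hk, _root_.map_zero]
    exact subsingleton_of_quotient hx N hpn
  · intro M _ _ _ hM _ hp hnil
    obtain ⟨r, hr, hreg, -⟩ := exists_isSMulRegular_forall_notMem hM Set.finite_empty
      (by simp) (Set.notMem_empty _)
    have : Subsingleton (LC x p (QuotSMulTop r M)) := by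
      apply subsingleton_of_supportDim_add_lt _ hx hrad
      rw [← ENat.WithBot.add_one_le_natCast_iff, add_right_comm]
      rwa [Module.supportDim_quotSMulTop_succ_eq_supportDim hreg hr]
    have hsurj : Function.Surjective fun h : LC x p M => (C r : MvPolynomial (Fin n) R) • h :=
      fun h => (map_mkQ_eq_zero_iff x hreg).1 (Subsingleton.elim _ _)
    obtain ⟨k, hk⟩ := hnil r hr
    refine subsingleton_of_forall_eq 0 fun h => ?_
    obtain ⟨u, rfl⟩ := hsurj.iterate k h
    rw [smul_iterate]
    exact hk u

lemma exists_isSMulRegular_forall_exists_pow_smul_eq_zero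
    (hM : maximalIdeal R ∉ associatedPrimes R M) (p : ℕ) [Subsingleton (LC x p M)] :
    ∃ r ∈ maximalIdeal R, IsSMulRegular M r ∧ ∀ y ∈ maximalIdeal R, ∃ k,
      ∀ h : LC x (p + 1) (QuotSMulTop r M), (C y : MvPolynomial (Fin n) R) ^ k • h = 0 := by
  have := isArtinian M hx hrad (p + 1)
  obtain ⟨F, hF⟩ := exists_controlsAttachedPrimes
    (⊤ : Submodule (MvPolynomial (Fin n) R) (LC x (p + 1) M))
  obtain ⟨r, hr, hreg, hrF⟩ := exists_isSMulRegular_forall_notMem hM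
    (F := Ideal.comap C '' F \ {maximalIdeal R}) ((hF.finite.image _).sdiff)
    (by rintro _ ⟨⟨P, hP, rfl⟩, -⟩; have := hF.isPrime P hP; exact Ideal.comap_isPrime _ _)
    (by simp)
  refine ⟨r, hr, hreg, fun y hy => ?_⟩
  obtain ⟨k, hk⟩ := hF.exists_pow_smul_le (C r) (C y) fun P hP hrP => by
    by_contra hyP
    exact hrF _ ⟨⟨P, hP, rfl⟩, fun h => hyP ((h ▸ hy : y ∈ P.comap C))⟩ hrP
  refine ⟨k, fun h => ?_⟩
  obtain ⟨t, rfl⟩ := map_mkQ_surjective_of_isSMulRegular x hreg p h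
  rw [← map_smul, map_mkQ_eq_zero_iff x hreg]
  obtain ⟨u, -, hu⟩ := hk (smul_mem_pointwise_smul t _ _ mem_top)
  exact ⟨u, hu⟩

theorem not_subsingleton_of_supportDim_add_eq {p : ℕ} (hp : Module.supportDim R M + p = n) :
    ¬ Subsingleton (LC x p M) := by
  refine devissage_induction (R := R) (motive := fun M _ _ =>
    ∀ p : ℕ, Module.supportDim R M + p = n → ¬ Subsingleton (LC x p M)) ?_ ?_ ?_ M p hp
  · intro M _ _ _ _ p hp
    rcases subsingleton_or_nontrivial M with hM | hM
    · rw [Module.supportDim_eq_bot_of_subsingleton, WithBot.bot_add] at hp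
      exact absurd hp.symm WithBot.coe_ne_bot
    rw [supportDim_eq_zero_of_isArtinian, zero_add] at hp
    obtain rfl : p = n := Nat.cast_injective hp
    obtain ⟨m, hm, hxm⟩ := exists_ne_zero_forall_maximalIdeal_smul_eq_zero (R := R) M
    exact not_subsingleton_of_mem_radical
      (fun j => maximalIdeal_le_radical_annihilator_of_isArtinian M (hx j)) hm
      fun j => hxm _ (hx j)
  · intro M _ _ _ N _ _ ih p hp _
    rw [← supportDim_quotient_eq_of_isArtinian N] at hp
    have hpn : p ≤ n := Nat.cast_le.1 ((le_supportDim_add _).trans_eq hp)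
    exact ih p hp (map_mkQ_surjective_of_isArtinian hx N hpn).subsingleton
  · intro M _ _ _ hM ih p hp _
    obtain ⟨r, hr, hreg, hnil⟩ :=
      exists_isSMulRegular_forall_exists_pow_smul_eq_zero M hx hrad hM p
    have hdim : Module.supportDim R (QuotSMulTop r M) + (p + 1 : ℕ) = n := by
      rwa [Nat.cast_add_one, add_comm (p : WithBot ℕ∞), ← add_assoc,
        Module.supportDim_quotSMulTop_succ_eq_supportDim hreg hr]
    refine ih r hr hreg (p + 1) hdim ?_
    rcases lt_or_ge (p + 1) n with hpn | hpn
    · exact subsingleton_of_forall_exists_pow_smul_eq_zero _ hx hrad hpn hdim.le hnil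
    · have : Subsingleton (LC x (p + 2) (QuotSMulTop r M)) := subsingleton_of_lt x (by lia)
      have : Subsingleton (LC x (p + 1) M) := subsingleton_of_isSMulRegular hreg (hrad hr)
      exact (map_mkQ_surjective_of_isSMulRegular x hreg p).subsingleton

end LC

end LocalRing

/-! ### Determinants and powers of parameters -/

section Determinant

open Matrix

variable {A : Type*} [CommRing A] {ι : Type*}

lemma mul_prod_mem_span_sq (u : ι → A) (s : Finset ι) {a : A} (ha : a ∈ Ideal.span (u '' s)) :
    a * ∏ i ∈ s, u i ∈ Ideal.span (Set.range fun i => u i ^ 2) := by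
  classical
  induction ha using span_induction with
  | mem _ h =>
    obtain ⟨i, hi, rfl⟩ := h
    rw [← Finset.mul_prod_erase s u hi, ← mul_assoc, ← sq]
    exact Ideal.mul_mem_right _ _ (Ideal.subset_span ⟨i, rfl⟩)
  | zero => simp
  | add _ _ _ _ ha hb => rw [add_mul]; exact add_mem ha hb
  | smul b _ _ ha => rw [smul_mul_assoc]; exact smul_mem _ b ha

variable [Fintype ι]

section DecidableEq

variable [DecidableEq ι]

lemma det_mul_mem_span_range_mulVec (D : Matrix ι ι A) (z : ι → A) (j : ι) :
    D.det * z j ∈ Ideal.span (Set.range (D *ᵥ z)) := by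
  have hcramer : D.adjugate *ᵥ (D *ᵥ z) = D.det • z := by
    rw [mulVec_mulVec, adjugate_mul, smul_mulVec, one_mulVec]
  rw [← smul_eq_mul, ← Pi.smul_apply, ← hcramer]
  exact Ideal.sum_mem _ fun l _ => Ideal.mul_mem_left _ _ (Ideal.subset_span ⟨l, rfl⟩)

lemma det_sub_det_updateRow_mul_prod_mem {z u : ι → A} {E : Matrix ι ι A} (hE : E *ᵥ z = u)
    {i : ι} {c : ι → A} (hc : c ⬝ᵥ z = u i) :
    (E.det - (E.updateRow i c).det) * ∏ j, u j ∈ Ideal.span (Set.range fun j => u j ^ 2) := by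
  set D := E.updateRow i (E i - c) with hD
  have hdet : E.det - (E.updateRow i c).det = D.det := by
    rw [sub_eq_iff_eq_add, ← det_updateRow_add, sub_add_cancel, updateRow_eq_self]
  have hDz : Set.range (D *ᵥ z) ⊆ insert 0 (u '' (Finset.univ.erase i : Finset ι)) := by
    rintro _ ⟨l, rfl⟩
    rcases eq_or_ne l i with rfl | hl
    · left
      rw [mulVec, hD, updateRow_self, sub_dotProduct, hc, ← hE]
      exact sub_self _
    · right
      exact ⟨l, by simp [hl], by simp [hD, mulVec, hl, ← hE]⟩
  have hDu : D.det * u i ∈ Ideal.span (u '' (Finset.univ.erase i : Finset ι)) := by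
    rw [← Ideal.span_insert_zero, ← hc, dotProduct, Finset.mul_sum]
    refine Ideal.sum_mem _ fun j _ => ?_
    rw [mul_left_comm]
    exact Ideal.mul_mem_left _ _ (Ideal.span_mono hDz (det_mul_mem_span_range_mulVec D z j))
  rw [hdet, ← Finset.mul_prod_erase _ u (Finset.mem_univ i), ← mul_assoc]
  exact mul_prod_mem_span_sq u _ hDu

theorem det_sub_det_mul_prod_mem {z u : ι → A} {E E' : Matrix ι ι A} (hE : E *ᵥ z = u)
    (hE' : E' *ᵥ z = u) :
    (E.det - E'.det) * ∏ j, u j ∈ Ideal.span (Set.range fun j => u j ^ 2) := by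
  -- The rows of `E` are exchanged for those of `E'` one at a time.
  let F (s : Finset ι) : Matrix ι ι A := fun i => if i ∈ s then E' i else E i
  have hF (s : Finset ι) : F s *ᵥ z = u := by
    ext i
    by_cases hi : i ∈ s
    · rw [← hE']; simp [F, mulVec, hi]
    · rw [← hE]; simp [F, mulVec, hi]
  suffices h : ∀ s : Finset ι,
      (E.det - (F s).det) * ∏ j, u j ∈ Ideal.span (Set.range fun j => u j ^ 2) by
    simpa [F] using h Finset.univ
  intro s
  induction s using Finset.induction_on with
  | empty => simp [F]
  | insert i s hi ih =>
    have hstep : F (insert i s) = (F s).updateRow i (E' i) := by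
      ext k j
      rcases eq_or_ne k i with rfl | hk
      · rw [updateRow_self]; simp [F]
      · rw [updateRow_ne hk]; simp [F, hk]
    rw [hstep, ← sub_add_sub_cancel _ (F s).det, add_mul]
    exact add_mem ih (det_sub_det_updateRow_mul_prod_mem (hF s) (by rw [← hE']; rfl))

lemma det_mul_prod_mulVec_mul_mem (Q : Matrix ι ι A) (w : ι → A) {a : A}
    (ha : a ∈ Ideal.span (Set.range w)) :
    Q.det * (∏ j, (Q *ᵥ w) j) * a ∈ Ideal.span (Set.range fun j => (Q *ᵥ w) j ^ 2) := by
  have hdet : Q.det * a ∈ Ideal.span (Set.range (Q *ᵥ w)) := by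
    induction ha using span_induction with
    | mem _ h => obtain ⟨i, rfl⟩ := h; exact det_mul_mem_span_range_mulVec Q w i
    | zero => simp
    | add _ _ _ _ ha hb => rw [mul_add]; exact add_mem ha hb
    | smul b _ _ ha => rw [mul_smul_comm]; exact smul_mem _ b ha
  rw [mul_right_comm]
  exact mul_prod_mem_span_sq _ _ (by simpa using hdet)

end DecidableEq

theorem prod_mul_prod_mul_smul_mem {M : Type*} [AddCommGroup M] [Module A M]
    {z y b c : ι → A} (hy : ∀ i, y i ∈ Ideal.span (Set.range z))
    (hbz : ∀ j, b j * z j ∈ Ideal.span (Set.range fun i => c i * y i)) {m : M}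
    (hm : (∏ i, c i) • m ∈ Ideal.span (Set.range fun i => c i * y i) • (⊤ : Submodule A M)) :
    ((∏ j, b j) * ∏ j, b j * z j) • m ∈
      Ideal.span (Set.range fun j => (b j * z j) ^ 2) • (⊤ : Submodule A M) := by
  classical
  simp only [Ideal.mem_span_range_iff_exists_fun] at hy hbz
  choose P hP using hy
  choose Q hQ using hbz
  have hPz : of P *ᵥ z = y := funext hP
  have hQy : of Q *ᵥ (fun i => c i * y i) = fun j => b j * z j := funext hQ
  have hdiag : diagonal b *ᵥ z = fun j => b j * z j := funext (mulVec_diagonal b z)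
  have hprod : (of Q * diagonal c * of P) *ᵥ z = fun j => b j * z j := by
    rw [← mulVec_mulVec, hPz, ← mulVec_mulVec, ← hQy]
    exact congrArg _ (funext (mulVec_diagonal c y))
  have hdet := smul_mem_smul (det_sub_det_mul_prod_mem hdiag hprod) (mem_top : m ∈ ⊤)
  rw [det_mul, det_mul, det_diagonal, det_diagonal, sub_mul, sub_smul] at hdet
  refine (sub_mem_iff_left _ ?_).1 hdet
  have hcomm : (of Q).det * (∏ i, c i) * (of P).det * ∏ j, b j * z j =
      (of P).det * ((of Q).det * (∏ j, b j * z j) * ∏ i, c i) := by ring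
  rw [hcomm, mul_smul, mul_smul _ (∏ i, c i)]
  refine smul_mem _ _ (Submodule.smul_induction_on hm (fun r hr s _ => ?_) fun s s' hs hs' => ?_)
  · have hQr := det_mul_prod_mulVec_mul_mem (of Q) _ hr
    rw [hQy] at hQr
    rw [smul_smul]
    exact smul_mem_smul hQr mem_top
  · rw [smul_add]; exact add_mem hs hs'

lemma prod_pow_smul_mem {M : Type*} [AddCommGroup M] [Module A M] {x y : ι → A} {a K t : ℕ}
    (hy : ∀ i, y i ∈ Ideal.span (Set.range fun j => x j ^ a))
    (hx : ∀ j, x j ^ K ∈ Ideal.span (Set.range fun i => y i ^ (t + 1))) {m : M}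
    (hm : (∏ i, y i ^ t) • m ∈
      Ideal.span (Set.range fun i => y i ^ (t + 1)) • (⊤ : Submodule A M)) :
    (∏ j, x j ^ (a + 2 * K)) • m ∈
      Ideal.span (Set.range fun j => x j ^ (a + 2 * K + a)) • (⊤ : Submodule A M) := by
  simp only [pow_succ] at hx hm
  have key := prod_mul_prod_mul_smul_mem hy (b := fun j => x j ^ K)
    (fun j => Ideal.mul_mem_right _ _ (hx j)) hm
  simp only [← pow_add, ← pow_mul, ← Finset.prod_mul_distrib] at key
  rwa [show K + (K + a) = a + 2 * K by ring, show (K + a) * 2 = a + 2 * K + a by ring] at key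

end Determinant

/-! ### Systems of parameters and the limit closure -/

section LimitClosure

variable {R : Type*} [CommRing R] {M : Type*} [AddCommGroup M] [Module R M] {ι : Type*} [Fintype ι]

lemma prod_mul_mem_span_pow_succ (y : ι → R) {k : ℕ} {a : R}
    (ha : a ∈ Ideal.span (Set.range fun i => y i ^ k)) :
    (∏ i, y i) * a ∈ Ideal.span (Set.range fun i => y i ^ (k + 1)) := by
  induction ha using span_induction with
  | mem _ h =>
    obtain ⟨i, rfl⟩ := h
    refine Ideal.mem_of_dvd _ ?_ (Ideal.subset_span ⟨i, rfl⟩)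
    simp only [pow_succ']
    exact mul_dvd_mul_right (Finset.dvd_prod_of_mem y (Finset.mem_univ i)) _
  | zero => simp
  | add _ _ _ _ ha hb => rw [mul_add]; exact add_mem ha hb
  | smul b _ _ ha => rw [mul_smul_comm]; exact smul_mem _ b ha

lemma monotone_comap_lsmul_prod_pow (y : ι → R) :
    Monotone fun n : ℕ =>
      (Ideal.span (Set.range fun i => y i ^ (n + 2)) • (⊤ : Submodule R M)).comap
        (LinearMap.lsmul R M ((∏ i, y i) ^ (n + 1))) := by
  refine monotone_nat_of_le_succ fun n m hm => ?_
  simp only [mem_comap, LinearMap.lsmul_apply] at hm ⊢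
  rw [pow_succ', mul_smul]
  refine Submodule.smul_induction_on hm (fun r hr s _ => ?_) fun s s' hs hs' => ?_
  · rw [smul_smul]
    exact smul_mem_smul (prod_mul_mem_span_pow_succ y hr) mem_top
  · rw [smul_add]
    exact add_mem hs hs'

lemma exists_forall_prod_pow_smul_mem [Module.Finite R M] {d : ℕ} {y : Fin d → R}
    (h : limitClosure (M := M) y = ⊤) :
    ∃ t : ℕ, ∀ m : M, (∏ i, y i ^ t) • m ∈
      Ideal.span (Set.range fun i => y i ^ (t + 1)) • (⊤ : Submodule R M) := by
  have hcompact : IsCompactElement (⊤ : Submodule R M) :=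
    (fg_iff_compact _).1 Module.Finite.fg_top
  obtain ⟨_, ⟨n, rfl⟩, hn⟩ := (CompleteLattice.isCompactElement_iff_le_of_directed_sSup_le _ _).1
    hcompact _ (Set.range_nonempty _)
    (directedOn_range.2 (monotone_comap_lsmul_prod_pow y).directed_le) h.ge
  refine ⟨n + 1, fun m => ?_⟩
  rw [Finset.prod_pow]
  exact hn (mem_top : m ∈ ⊤)

end LimitClosure

section Parameters

lemma le_radical_span_pow {R : Type*} [CommRing R] {ι : Type*} {x : ι → R} {I : Ideal R}
    (h : I ≤ (Ideal.span (Set.range x)).radical) (a : ℕ) :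
    I ≤ (Ideal.span (Set.range fun j => x j ^ a)).radical := by
  refine h.trans (Ideal.radical_le_radical_iff.2 (Ideal.span_le.2 ?_))
  rintro _ ⟨j, rfl⟩
  exact ⟨a, Ideal.subset_span ⟨j, rfl⟩⟩

lemma exists_maximalIdeal_le_radical_span {R : Type*} [CommRing R] [IsLocalRing R]
    [IsNoetherianRing R] {d : ℕ} (hd : ringKrullDim R = d) :
    ∃ x : Fin d → R, (∀ j, x j ∈ maximalIdeal R) ∧
      maximalIdeal R ≤ (Ideal.span (Set.range x)).radical := by
  obtain ⟨s, hs, hcard⟩ := Ideal.exists_finset_card_eq_height_of_isNoetherianRing (maximalIdeal R)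
  rw [← maximalIdeal_height_eq_ringKrullDim, ← hcard] at hd
  let e : Fin d ≃ s := (s.equivFinOfCardEq (by exact_mod_cast hd)).symm
  refine ⟨fun j => e j, fun j => hs.1.2 (Ideal.subset_span (e j).2), ?_⟩
  rw [show Set.range (fun j => (e j : R)) = s from
    (EquivLike.range_comp _ e).trans Subtype.range_coe, Ideal.radical_eq_sInf]
  exact le_sInf fun P hP => hs.2 ⟨hP.2, hP.1⟩ (le_maximalIdeal hP.2.ne_top)

lemma maximalIdeal_le_radical_of_isFiniteLength {R : Type*} [CommRing R] [IsLocalRing R]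
    {M : Type*} [AddCommGroup M] [Module R M] [Module.Finite R M] {I : Ideal R}
    (h : IsFiniteLength R (M ⧸ (I • (⊤ : Submodule R M)))) :
    maximalIdeal R ≤ (I ⊔ Module.annihilator R M).radical := by
  have := (isFiniteLength_iff_isNoetherian_isArtinian.1 h).2
  have hrad : (Module.annihilator R (M ⧸ (I • (⊤ : Submodule R M)))).radical =
      (I ⊔ Module.annihilator R M).radical := by
    rw [← PrimeSpectrum.zeroLocus_eq_iff, ← Module.support_eq_zeroLocus, Module.support_quotient,
      Module.support_eq_zeroLocus, PrimeSpectrum.zeroLocus_sup, Set.inter_comm]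
  exact hrad ▸ maximalIdeal_le_radical_annihilator_of_isArtinian _

lemma maximalIdeal_quotient_le_radical_map {R : Type*} [CommRing R] [IsLocalRing R] {I J : Ideal R}
    [IsLocalRing (R ⧸ J)] (h : maximalIdeal R ≤ (I ⊔ J).radical) :
    maximalIdeal (R ⧸ J) ≤ (I.map (Ideal.Quotient.mk J)).radical := by
  rw [← map_maximalIdeal_of_surjective _ Ideal.Quotient.mk_surjective, Ideal.map_le_iff_le_comap,
    Ideal.comap_radical, Ideal.comap_map_of_surjective _ Ideal.Quotient.mk_surjective]
  simpa [← RingHom.ker_eq_comap_bot] using h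

lemma exists_forall_not_forall_prod_pow_smul_mem {R : Type*} [CommRing R] [IsLocalRing R]
    [IsNoetherianRing R] {M : Type*} [AddCommGroup M] [Module R M] [Module.Finite R M] {d : ℕ}
    (hR : ringKrullDim R = d) (hM : Module.supportDim R M = d) :
    ∃ k : ℕ, 0 < k ∧ ∀ y : Fin d → R, (∀ i, y i ∈ maximalIdeal R ^ k) →
      maximalIdeal R ≤ (Ideal.span (Set.range y)).radical → ∀ t : ℕ,
      ¬ ∀ m : M, (∏ i, y i ^ t) • m ∈
        Ideal.span (Set.range fun i => y i ^ (t + 1)) • (⊤ : Submodule R M) := by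
  by_contra! hcon
  obtain ⟨x, hx, hrad⟩ := exists_maximalIdeal_le_radical_span hR
  refine LC.not_subsingleton_of_supportDim_add_eq M hx hrad (p := 0) (by simpa using hM)
    (LC.subsingleton_zero_of_forall_exists_prod_smul_mem x fun a => ?_)
  obtain ⟨k, hk⟩ := Ideal.exists_pow_le_of_le_radical_of_fg (le_radical_span_pow hrad a)
    (IsNoetherian.noetherian _)
  obtain ⟨y, hyk, hyrad, t, ht⟩ := hcon (k + 1) k.succ_pos
  obtain ⟨K, hK⟩ := Ideal.exists_pow_le_of_le_radical_of_fg (le_radical_span_pow hyrad (t + 1))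
    (IsNoetherian.noetherian _)
  exact ⟨a + 2 * K, fun m => prod_pow_smul_mem
    (fun i => hk (Ideal.pow_le_pow_right k.le_succ (hyk i)))
    (fun j => hK (Ideal.pow_mem_pow (hx j) K)) (ht m)⟩

end Parameters

section BaseChange

variable {R S M : Type*} [CommRing R] [CommRing S] [Algebra R S] [AddCommGroup M] [Module R M]
  [Module S M] [IsScalarTower R S M]

lemma algebraMap_smul_mem_span_smul_top {ι : Type*} {y : ι → R} {c : R} {m : M}
    (h : c • m ∈ Ideal.span (Set.range y) • (⊤ : Submodule R M)) :
    algebraMap R S c • m ∈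
      Ideal.span (Set.range fun i => algebraMap R S (y i)) • (⊤ : Submodule S M) := by
  rw [← restrictScalars_top R S M, ← Ideal.smul_restrictScalars, Ideal.map_span,
    ← Set.range_comp] at h
  rwa [algebraMap_smul]

lemma annihilator_eq_bot_of_quotient_annihilator [Module (R ⧸ Module.annihilator R M) M]
    [IsScalarTower R (R ⧸ Module.annihilator R M) M] :
    Module.annihilator (R ⧸ Module.annihilator R M) M = ⊥ := by
  rw [← Ideal.map_comap_of_surjective _ (Ideal.Quotient.mk_surjective) (Module.annihilator _ M),
    ← Ideal.Quotient.algebraMap_eq, Module.comap_annihilator, Ideal.Quotient.algebraMap_eq,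
    Ideal.map_quotient_self]

lemma supportDim_quotient_annihilator [Module.Finite R M] [Module (R ⧸ Module.annihilator R M) M]
    [IsScalarTower R (R ⧸ Module.annihilator R M) M] :
    Module.supportDim (R ⧸ Module.annihilator R M) M =
      ringKrullDim (R ⧸ Module.annihilator R M) := by
  have : Module.Finite (R ⧸ Module.annihilator R M) M := .of_restrictScalars_finite R _ _
  rw [Module.supportDim_eq_ringKrullDim_quotient_annihilator,
    annihilator_eq_bot_of_quotient_annihilator]
  exact ringKrullDim_eq_of_ringEquiv (RingEquiv.quotientBot _)

end BaseChange

end MonomialProperty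

/-- There is a positive integer `n` such that every system of parameters of `M` contained in
`m^n` satisfies the monomial property `(y)^lim_M ≠ M`. -/
theorem exists_monomial_property_bound
    {R : Type*} [CommRing R] [IsNoetherianRing R] [IsLocalRing R]
    {M : Type*} [AddCommGroup M] [Module R M] [Module.Finite R M]
    {d : ℕ} (hd : moduleDim R M = d) :
    ∃ n : ℕ, 0 < n ∧ ∀ y : Fin d → R, (∀ i, y i ∈ maximalIdeal R ^ n) →
      IsSystemOfParameters M y → limitClosure (M := M) y ≠ ⊤ := by
  unfold moduleDim at hd
  have : Nontrivial (R ⧸ Module.annihilator R M) :=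
    not_subsingleton_iff_nontrivial.1 fun _ =>
      WithBot.bot_ne_coe (ringKrullDim_eq_bot_of_subsingleton.symm.trans hd)
  have : IsLocalRing (R ⧸ Module.annihilator R M) :=
    .of_surjective' _ Ideal.Quotient.mk_surjective
  let := Module.quotientAnnihilator (R := R) (M := M)
  have : IsScalarTower R (R ⧸ Module.annihilator R M) M :=
    (Module.isTorsionBySet_annihilator R M).isScalarTower
  have : Module.Finite (R ⧸ Module.annihilator R M) M := .of_restrictScalars_finite R _ _
  obtain ⟨k, hk, hbound⟩ := MonomialProperty.exists_forall_not_forall_prod_pow_smul_mem hd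
    (MonomialProperty.supportDim_quotient_annihilator.trans hd)
  refine ⟨k, hk, fun y hy hsop hlim => ?_⟩
  obtain ⟨t, ht⟩ := MonomialProperty.exists_forall_prod_pow_smul_mem hlim
  refine hbound (fun i => algebraMap R _ (y i)) (fun i => ?_) ?_ t fun m => ?_
  · rw [← map_maximalIdeal_of_surjective _ Ideal.Quotient.mk_surjective, ← Ideal.map_pow]
    exact Ideal.mem_map_of_mem _ (hy i)
  · have := MonomialProperty.maximalIdeal_quotient_le_radical_map
      (MonomialProperty.maximalIdeal_le_radical_of_isFiniteLength hsop.2)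
    rwa [Ideal.map_span, ← Set.range_comp] at this
  · simpa only [map_prod, map_pow] using
      MonomialProperty.algebraMap_smul_mem_span_smul_top
      (S := R ⧸ Module.annihilator R M) (ht m)
end

section
/- Let (R, m) be a Noetherian local ring and M a finitely generated R-module of dimension d, and let x = x_1, ..., x_r be a sequence of elements of R. Then: (i) if the top local cohomology module H^r_{(x)}(M) with support in the ideal (x_1, ..., x_r) vanishes, then (x)^lim_M = M; in particular, if r > d then (x)^lim_M = M; and (ii) if r = d, then M/(x)^lim_M has finite length. -/
/-!
Write `x = (y, z)` with `y` the first element of the sequence.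

**Dimension statements.** Let `N` be the quotient of `M` by its `y`-power torsion and then by `y`.
As `y` is regular on `M` modulo torsion, `dim N ≤ dim M - 1`, and clearing the torsion shows that
the preimage in `M` of `(z)^lim_N` lies in `(x)^lim_M`. Induction on the length of `x` reduces the
case `r > d` to `M = 0`, and the case `r = d` to `dim M ≤ 0`, where `M` itself has finite length.

**Vanishing of the top local cohomology.** Express `H^i_I(M) = 0` elementwise through the colimit
of the modules `Ext^i(R ⧸ J, M)`, and let `Γ` and `M̄` be the kernel and the image of `M → M_y`.
Local cohomology with support in `(x)` vanishes on `M_y`, because there `y` acts both nilpotently on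
each class and bijectively; on the `y`-torsion modules `Γ` and `M_y ⧸ M̄` it agrees with local
cohomology with support in `(z)`. The long exact sequences of `0 → Γ → M → M̄ → 0` and
`0 → M̄ → M_y → M_y ⧸ M̄ → 0` then give vanishing above degree `r`, and show that
`H^r_{(x)}(M) = 0` forces `H^{r-1}_{(z)}(M_y ⧸ M̄) = 0`. By induction `(z)^lim` is all of
`M_y ⧸ M̄`; evaluating this at `m / y` and clearing denominators gives `m ∈ (x)^lim_M`. The
induction leaves the finitely generated modules, so it has to be carried out for arbitrary `M`.

**Comparison.** Mathlib's `localCohomology I i` is a filtered colimit, over the powers of `I`, of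
left derived functors of `Hom(-, M)` with values in the opposite category. A class in `Ext` is
represented by a cocycle on a projective resolution, which also defines an element of the derived
functor; if that element dies at a later stage of the colimit, so does the class.
-/

open IsLocalRing

universe u

/-! ### Limit closures -/

section LimitClosure

variable {R M N : Type*} [CommRing R] [AddCommGroup M] [Module R M] [AddCommGroup N] [Module R N]

lemma prod_pow_smul_mem {ι : Type*} [Fintype ι] (x : ι → R) {a k : ℕ} {m : M}
    (hm : m ∈ Ideal.span (Set.range fun i => x i ^ a) • (⊤ : Submodule R M)) :
    (∏ i, x i) ^ k • m ∈ Ideal.span (Set.range fun i => x i ^ (a + k)) • (⊤ : Submodule R M) := by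
  have hle : Ideal.span {(∏ i, x i) ^ k} * Ideal.span (Set.range fun i => x i ^ a) ≤
      Ideal.span (Set.range fun i => x i ^ (a + k)) := by
    rw [Ideal.span_mul_span', Ideal.span_le]
    rintro _ ⟨_, rfl, _, ⟨i, rfl⟩, rfl⟩
    refine Ideal.mem_of_dvd _ ?_ (Ideal.subset_span ⟨i, rfl⟩)
    simp only [pow_add, mul_comm (x i ^ a)]
    exact mul_dvd_mul_right (pow_dvd_pow_of_dvd (Finset.dvd_prod_of_mem x (Finset.mem_univ i)) k) _
  refine Submodule.smul_mono_left hle ?_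
  rw [Submodule.mul_smul]
  exact Submodule.smul_mem_smul (Ideal.mem_span_singleton_self _) hm

lemma mem_limitClosure_iff {r : ℕ} {x : Fin r → R} {m : M} :
    m ∈ limitClosure (M := M) x ↔
      ∃ n : ℕ, (∏ i, x i) ^ n • m ∈
        Ideal.span (Set.range fun i => x i ^ (n + 1)) • (⊤ : Submodule R M) := by
  have hsucc (n : ℕ) (v : M)
      (hv : (∏ i, x i) ^ n • v ∈
        Ideal.span (Set.range fun i => x i ^ (n + 1)) • (⊤ : Submodule R M)) :
      (∏ i, x i) ^ (n + 1) • v ∈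
        Ideal.span (Set.range fun i => x i ^ (n + 2)) • (⊤ : Submodule R M) := by
    rw [pow_succ', mul_smul]
    simpa only [pow_one] using prod_pow_smul_mem x (k := 1) hv
  have hmono := monotone_nat_of_le_succ (f := fun n : ℕ =>
    (Ideal.span (Set.range fun i => x i ^ (n + 2)) • (⊤ : Submodule R M)).comap
      (LinearMap.lsmul R M ((∏ i, x i) ^ (n + 1)))) fun n => hsucc (n + 1)
  rw [limitClosure, Submodule.mem_iSup_of_directed _ hmono.directed_le]
  exact ⟨fun ⟨n, hn⟩ => ⟨n + 1, hn⟩, fun ⟨n, hn⟩ => ⟨n, hsucc n m hn⟩⟩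

lemma limitClosure_zero (x : Fin 0 → R) : limitClosure (M := M) x = ⊥ := by
  ext m
  simp [mem_limitClosure_iff]

lemma mem_limitClosure_of_tail {r : ℕ} {x : Fin (r + 1) → R} {m b : M} {n l : ℕ}
    (h : x 0 ^ l • (∏ i, Fin.tail x i) ^ n • m - x 0 ^ (l + 1) • b ∈
      Ideal.span (Set.range fun i => Fin.tail x i ^ (n + 1)) • (⊤ : Submodule R M)) :
    m ∈ limitClosure x := by
  refine mem_limitClosure_iff.mpr ⟨n + l, ?_⟩
  have hsplit : (∏ i, x i) ^ (n + l) • m =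
      x 0 ^ n • (∏ i, Fin.tail x i) ^ l •
        (x 0 ^ l • (∏ i, Fin.tail x i) ^ n • m - x 0 ^ (l + 1) • b) +
      x 0 ^ (n + l + 1) • (∏ i, Fin.tail x i) ^ l • b := by
    simp only [Fin.prod_univ_succ, Fin.tail]
    module
  have htail : Ideal.span (Set.range fun i => Fin.tail x i ^ (n + 1 + l)) ≤
      Ideal.span (Set.range fun i => x i ^ (n + l + 1)) := by
    refine Ideal.span_mono ?_
    rintro _ ⟨i, rfl⟩
    exact ⟨i.succ, by simp only [Fin.tail, add_right_comm]⟩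
  rw [hsplit]
  exact add_mem
    (Submodule.smul_mem _ _ (Submodule.smul_mono_left htail (prod_pow_smul_mem _ h)))
    (Submodule.smul_mem_smul (Ideal.subset_span ⟨0, rfl⟩) trivial)

lemma comap_limitClosure_tail_le {r : ℕ} (x : Fin (r + 1) → R) (q : M →ₗ[R] N)
    (hq : ∀ (I : Ideal R) (m : M), q m ∈ I • (⊤ : Submodule R N) →
      ∃ (l : ℕ) (b : M), x 0 ^ l • m - x 0 ^ (l + 1) • b ∈ I • (⊤ : Submodule R M)) :
    (limitClosure (Fin.tail x)).comap q ≤ limitClosure x := by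
  intro m hm
  obtain ⟨n, hn⟩ := mem_limitClosure_iff.mp hm
  rw [← map_smul] at hn
  obtain ⟨l, b, hb⟩ := hq _ _ hn
  exact mem_limitClosure_of_tail hb

lemma comap_limitClosure_tail_le_of_surjective {r : ℕ} (x : Fin (r + 1) → R) {q : M →ₗ[R] N}
    (hq : Function.Surjective q)
    (hker : ∀ m, q m = 0 → ∃ (l : ℕ) (b : M), x 0 ^ l • m = x 0 ^ (l + 1) • b) :
    (limitClosure (Fin.tail x)).comap q ≤ limitClosure x := by
  refine comap_limitClosure_tail_le x q fun I m hm => ?_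
  rw [← LinearMap.range_eq_top.mpr hq, ← Submodule.map_top, ← Submodule.map_smul''] at hm
  obtain ⟨a, ha, hqa⟩ := hm
  obtain ⟨l, b, hb⟩ := hker (m - a) (by rw [map_sub, hqa, sub_self])
  refine ⟨l, b, ?_⟩
  rw [← hb, ← smul_sub, sub_sub_cancel]
  exact Submodule.smul_mem _ _ ha

end LimitClosure

/-! ### Modules of small dimension -/

section Dimension

variable {R M : Type*} [CommRing R] [AddCommGroup M] [Module R M]

lemma mem_torsion'_powers_iff {y : R} {m : M} :
    m ∈ Submodule.torsion' R M (Submonoid.powers y) ↔ ∃ n : ℕ, y ^ n • m = 0 := by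
  simp [Submodule.mem_torsion'_iff, Submonoid.smul_def, Submonoid.mem_powers_iff]

/-- The quotient of `M` by its `y`-power torsion and then by `y`. -/
abbrev TorsionFreeQuotSMulTop (y : R) (M : Type*) [AddCommGroup M] [Module R M] : Type _ :=
  QuotSMulTop y (M ⧸ Submodule.torsion' R M (Submonoid.powers y))

/-- The projection from `M` to the quotient by its `y`-power torsion and then by `y`. -/
def TorsionFreeQuotSMulTop.mk (y : R) (M : Type*) [AddCommGroup M] [Module R M] :
    M →ₗ[R] TorsionFreeQuotSMulTop y M :=
  Submodule.mkQ _ ∘ₗ Submodule.mkQ _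

lemma TorsionFreeQuotSMulTop.mk_surjective (y : R) :
    Function.Surjective (TorsionFreeQuotSMulTop.mk y M) :=
  (Submodule.mkQ_surjective _).comp (Submodule.mkQ_surjective _)

lemma TorsionFreeQuotSMulTop.exists_pow_smul_eq_of_mk_eq_zero {y : R} {m : M}
    (hm : TorsionFreeQuotSMulTop.mk y M m = 0) :
    ∃ (l : ℕ) (b : M), y ^ l • m = y ^ (l + 1) • b := by
  rw [TorsionFreeQuotSMulTop.mk, LinearMap.comp_apply, Submodule.mkQ_apply,
    Submodule.Quotient.mk_eq_zero, Submodule.mem_smul_pointwise_iff_exists] at hm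
  obtain ⟨c, -, hc⟩ := hm
  obtain ⟨b, rfl⟩ := Submodule.mkQ_surjective _ c
  rw [← map_smul, eq_comm, ← sub_eq_zero, ← map_sub, Submodule.mkQ_apply,
    Submodule.Quotient.mk_eq_zero] at hc
  obtain ⟨l, hl⟩ := mem_torsion'_powers_iff.mp hc
  refine ⟨l, b, ?_⟩
  rwa [smul_sub, sub_eq_zero, smul_smul, ← pow_succ] at hl

lemma isSMulRegular_quotient_torsion' (y : R) :
    IsSMulRegular (M ⧸ Submodule.torsion' R M (Submonoid.powers y)) y := by
  rw [isSMulRegular_iff_right_eq_zero_of_smul]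
  intro z hz
  obtain ⟨m, rfl⟩ := Submodule.mkQ_surjective _ z
  rw [← map_smul, Submodule.mkQ_apply, Submodule.Quotient.mk_eq_zero] at hz
  obtain ⟨l, hl⟩ := mem_torsion'_powers_iff.mp hz
  rw [Submodule.mkQ_apply, Submodule.Quotient.mk_eq_zero, mem_torsion'_powers_iff]
  exact ⟨l + 1, by rwa [pow_succ, mul_smul]⟩

lemma supportDim_torsionFreeQuotSMulTop_add_one_le [Module.Finite R M] (y : R) :
    Module.supportDim R (TorsionFreeQuotSMulTop y M) + 1 ≤ Module.supportDim R M :=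
  (Module.supportDim_quotSMulTop_succ_le_of_notMem_minimalPrimes fun _ =>
    (isSMulRegular_quotient_torsion' y).notMem_of_mem_minimalPrimes).trans
      (Module.supportDim_le_of_surjective _ (Submodule.mkQ_surjective _))

lemma comap_limitClosure_torsionFreeQuotSMulTop_le {r : ℕ} (x : Fin (r + 1) → R) :
    (limitClosure (Fin.tail x)).comap (TorsionFreeQuotSMulTop.mk (x 0) M) ≤ limitClosure x :=
  comap_limitClosure_tail_le_of_surjective x (TorsionFreeQuotSMulTop.mk_surjective _) fun _ =>
    TorsionFreeQuotSMulTop.exists_pow_smul_eq_of_mk_eq_zero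

theorem limitClosure_eq_top_of_supportDim_lt [Module.Finite R M] {r : ℕ} (x : Fin r → R)
    (h : Module.supportDim R M < r) : limitClosure (M := M) x = ⊤ := by
  induction r generalizing M with
  | zero =>
    have : Subsingleton M := by
      by_contra hM
      rw [not_subsingleton_iff_nontrivial] at hM
      have := (Module.nonempty_support_of_nontrivial (R := R) (M := M)).to_subtype
      exact (Order.krullDim_nonneg (α := Module.support R M)).not_gt h
    exact Subsingleton.elim _ _
  | succ r ih =>
    have hdim : Module.supportDim R (TorsionFreeQuotSMulTop (x 0) M) < r :=
      ENat.WithBot.add_one_le_natCast_iff.mp (ENat.WithBot.lt_add_one_iff.mp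
        ((supportDim_torsionFreeQuotSMulTop_add_one_le (x 0)).trans_lt (mod_cast h)))
    have hle := comap_limitClosure_torsionFreeQuotSMulTop_le (M := M) x
    rwa [ih _ hdim, Submodule.comap_top, top_le_iff] at hle

lemma isNoetherianRing_quotient_annihilator [IsNoetherian R M] :
    IsNoetherianRing (R ⧸ Module.annihilator R M) := by
  obtain ⟨s, hs⟩ := (isNoetherian_def.mp ‹_› ⊤ : (⊤ : Submodule R M).FG)
  let φ : R →ₗ[R] s → M := LinearMap.pi fun m => LinearMap.toSpanSingleton R M m
  have hφ : LinearMap.ker φ = Module.annihilator R M := by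
    ext a
    rw [← Submodule.annihilator_top, ← hs, Submodule.mem_annihilator_span]
    simp [φ, funext_iff]
  have : IsNoetherian R (R ⧸ Module.annihilator R M) :=
    isNoetherian_of_injective (Submodule.liftQ _ φ hφ.ge)
      (LinearMap.ker_eq_bot.mp (Submodule.ker_liftQ_eq_bot _ _ _ hφ.le))
  exact isNoetherianRing_iff.mpr (isNoetherian_of_tower R this)

lemma isFiniteLength_of_supportDim_le_zero [IsNoetherian R M] (h : Module.supportDim R M ≤ 0) :
    IsFiniteLength R M := by
  rw [Module.supportDim_eq_ringKrullDim_quotient_annihilator] at h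
  let A := R ⧸ Module.annihilator R M
  let _ : Module A M := (Module.isTorsionBySet_annihilator R M).module
  have : IsScalarTower R A M := (Module.isTorsionBySet_annihilator R M).isScalarTower
  have : Module.Finite A M := .of_restrictScalars_finite R A M
  have : IsNoetherianRing A := isNoetherianRing_quotient_annihilator
  have : Ring.KrullDimLE 0 A := Ring.krullDimLE_iff.mpr (mod_cast h)
  have : IsArtinianRing A := IsNoetherianRing.isArtinianRing_of_krullDimLE_zero
  exact isFiniteLength_iff_isNoetherian_isArtinian.mpr
    ⟨‹_›, isArtinian_of_surjective_algebraMap (R := A) Ideal.Quotient.mk_surjective⟩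

theorem isFiniteLength_quotient_limitClosure [IsNoetherian R M] {r : ℕ} (x : Fin r → R)
    (h : Module.supportDim R M ≤ r) : IsFiniteLength R (M ⧸ limitClosure (M := M) x) := by
  induction r generalizing M with
  | zero =>
    exact (isFiniteLength_of_supportDim_le_zero (mod_cast h)).of_surjective
      (Submodule.mkQ_surjective _)
  | succ r ih =>
    have hdim : Module.supportDim R (TorsionFreeQuotSMulTop (x 0) M) ≤ r :=
      ENat.WithBot.lt_add_one_iff.mp (mod_cast ENat.WithBot.add_one_le_natCast_iff.mp
        ((supportDim_torsionFreeQuotSMulTop_add_one_le (x 0)).trans h))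
    let q := TorsionFreeQuotSMulTop.mk (x 0) M
    have hcomap : IsFiniteLength R (M ⧸ (limitClosure (Fin.tail x)).comap q) :=
      (ih (Fin.tail x) hdim).of_injective (f := Submodule.mapQ _ _ q le_rfl)
        (LinearMap.ker_eq_bot.mp (by rw [Submodule.ker_mapQ, Submodule.mkQ_map_self]))
    exact hcomap.of_surjective
      (Submodule.factor_surjective (comap_limitClosure_torsionFreeQuotSMulTop_le x))

end Dimension

/-! ### Local cohomology through `Ext` -/

section LocalExt

open CategoryTheory Abelian

variable {R : Type u} [CommRing R]

lemma isSMulRegular_ext_of_isUnit {M : ModuleCat.{u} R} {t : R}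
    (ht : IsUnit (algebraMap R (Module.End R M) t)) (A : ModuleCat.{u} R) (i : ℕ) :
    IsSMulRegular (Ext A M i) t := by
  let f : M ≅ M := (LinearEquiv.ofBijective _ ((Module.End.isUnit_iff _).mp ht)).toModuleIso
  have hf : f.hom = t • 𝟙 M := rfl
  rw [isSMulRegular_iff_right_eq_zero_of_smul]
  intro e he
  rw [← Ext.comp_mk₀_id e, ← f.hom_inv_id, ← Ext.mk₀_comp_mk₀,
    ← Ext.comp_assoc_of_third_deg_zero, hf, Ext.mk₀_smul, Ext.comp_smul, Ext.comp_mk₀_id, he,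
    Ext.zero_comp]

lemma isTorsion'_ext [IsNoetherianRing R] {S : Submonoid R} {N : ModuleCat.{u} R}
    (hN : Module.IsTorsion' N S) (A : ModuleCat.{u} R) [Module.Finite R A] (i : ℕ) :
    Module.IsTorsion' (Ext A N i) S := by
  induction i generalizing A with
  | zero =>
    intro e
    obtain ⟨f, rfl⟩ := Ext.linearEquiv₀ (R := R) |>.symm.surjective e
    obtain ⟨s, hs⟩ := (Module.Finite.fg_top : (⊤ : Submodule R A).FG)
    choose t ht using fun a : A => @hN (f a)
    refine ⟨∏ a ∈ s, t a, ?_⟩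
    have hf : (∏ a ∈ s, (t a : R)) • f = 0 := by
      ext1
      refine LinearMap.ext_on hs fun a ha => ?_
      obtain ⟨c, hc⟩ := Finset.dvd_prod_of_mem (fun a => (t a : R)) ha
      simp only [ModuleCat.hom_smul, LinearMap.smul_apply, hc, mul_comm _ c, mul_smul]
      exact (congrArg (c • ·) (ht a)).trans (smul_zero c)
    rw [Submonoid.smul_def, ← map_smul, Submonoid.coe_finsetProd, hf, map_zero]
  | succ i ih =>
    intro e
    obtain ⟨n, g, hg⟩ := Module.Finite.exists_fin' R A
    have hS := LinearMap.shortExact_shortComplexKer hg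
    have : Projective (ModuleCat.of R (Fin n → R)) := inferInstance
    obtain ⟨e₁, rfl⟩ := precomp_extClass_surjective_of_projective_X₂ N hS i e
    obtain ⟨t, ht⟩ := @ih (ModuleCat.of R (LinearMap.ker g)) _ e₁
    exact ⟨t, (map_smul (hS.extClass.precompOfLinear R N (add_comm 1 i)) (t : R) e₁).symm.trans
      (by rw [← Submonoid.smul_def, ht, map_zero])⟩

/-- The projection `R ⧸ J' ⟶ R ⧸ J` for ideals `J' ≤ J`. -/
noncomputable def quotMap {J' J : Ideal R} (h : J' ≤ J) :
    ModuleCat.of R (R ⧸ J') ⟶ ModuleCat.of R (R ⧸ J) :=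
  ModuleCat.ofHom (Submodule.factor h)

lemma quotMap_comp {J'' J' J : Ideal R} (h' : J'' ≤ J') (h : J' ≤ J) :
    quotMap h' ≫ quotMap h = quotMap (h'.trans h) :=
  ModuleCat.hom_ext (Submodule.factor_comp h' h)

instance epi_quotMap {J' J : Ideal R} (h : J' ≤ J) : Epi (quotMap h) :=
  (ModuleCat.epi_iff_surjective _).mpr (Submodule.factor_surjective h)

/-- The restriction `Ext^i(R ⧸ J, M) → Ext^i(R ⧸ J', M)` along the projection `R ⧸ J' ⟶ R ⧸ J`:
the transition map of the direct system whose colimit is local cohomology. -/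
noncomputable def extRestrict {J' J : Ideal R} (h : J' ≤ J) {M : ModuleCat.{u} R} {i : ℕ} :
    Ext (ModuleCat.of R (R ⧸ J)) M i →ₗ[R] Ext (ModuleCat.of R (R ⧸ J')) M i :=
  (Ext.mk₀ (quotMap h)).precompOfLinear R M (zero_add i)

section

variable {J'' J' J : Ideal R} (h' : J'' ≤ J') (h : J' ≤ J) {M N : ModuleCat.{u} R} {i j k : ℕ}

lemma extRestrict_apply (e : Ext (ModuleCat.of R (R ⧸ J)) M i) :
    extRestrict h e = (Ext.mk₀ (quotMap h)).comp e (zero_add i) :=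
  rfl

lemma extRestrict_extRestrict (e : Ext (ModuleCat.of R (R ⧸ J)) M i) :
    extRestrict h' (extRestrict h e) = extRestrict (h'.trans h) e := by
  simp only [extRestrict_apply, Ext.mk₀_comp_mk₀_assoc, quotMap_comp]

lemma extRestrict_comp (e : Ext (ModuleCat.of R (R ⧸ J)) M i) (α : Ext M N j) (hk : i + j = k) :
    extRestrict h (e.comp α hk) = (extRestrict h e).comp α hk :=
  (Ext.comp_assoc _ e α (zero_add i) hk (by lia)).symm

end

/-- The vanishing of `colim_J Ext^i(R ⧸ J, M)`, where `J` runs through the ideals whose radical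
contains `I`, expressed elementwise: every class dies after restriction to a smaller such ideal.
Over a Noetherian ring this says that `H^i_I(M) = 0`. -/
def LocalExtVanishes (I : Ideal R) (i : ℕ) (M : ModuleCat.{u} R) : Prop :=
  ∀ J : Ideal R, I ≤ J.radical → ∀ e : Ext (ModuleCat.of R (R ⧸ J)) M i,
    ∃ (J' : Ideal R) (h : J' ≤ J), I ≤ J'.radical ∧ extRestrict h e = 0

namespace LocalExtVanishes

variable {I : Ideal R}

lemma of_exact {X Y Z : ModuleCat.{u} R} {a b i j k : ℕ} {α : Ext X Y a} {β : Ext Y Z b}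
    {hα : i + a = j} {hβ : j + b = k}
    (hexact : ∀ {A : ModuleCat.{u} R} (e : Ext A Y j), e.comp β hβ = 0 →
      ∃ e' : Ext A X i, e'.comp α hα = e)
    (hX : LocalExtVanishes I i X) (hZ : LocalExtVanishes I k Z) : LocalExtVanishes I j Y := by
  intro J hJ e
  obtain ⟨J₁, hJ₁, hI₁, he₁⟩ := hZ J hJ (e.comp β hβ)
  rw [extRestrict_comp] at he₁
  obtain ⟨e', he'⟩ := hexact _ he₁
  obtain ⟨J₂, hJ₂, hI₂, he₂⟩ := hX J₁ hI₁ e'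
  refine ⟨J₂, hJ₂.trans hJ₁, hI₂, ?_⟩
  rw [← extRestrict_extRestrict hJ₂ hJ₁, ← he', extRestrict_comp, he₂, Ext.zero_comp]

section ShortExact

variable {S : ShortComplex (ModuleCat.{u} R)} {i : ℕ}

lemma of_shortExact₂ (hS : S.ShortExact) (h₁ : LocalExtVanishes I i S.X₁)
    (h₃ : LocalExtVanishes I i S.X₃) : LocalExtVanishes I i S.X₂ :=
  of_exact (Ext.covariant_sequence_exact₂ _ hS) h₁ h₃

lemma of_shortExact₃ (hS : S.ShortExact) (h₂ : LocalExtVanishes I i S.X₂)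
    (h₁ : LocalExtVanishes I (i + 1) S.X₁) : LocalExtVanishes I i S.X₃ :=
  of_exact (fun e => Ext.covariant_sequence_exact₃ _ hS e rfl) h₂ h₁

lemma of_shortExact₁ (hS : S.ShortExact) (h₃ : LocalExtVanishes I i S.X₃)
    (h₂ : LocalExtVanishes I (i + 1) S.X₂) : LocalExtVanishes I (i + 1) S.X₁ :=
  of_exact (fun e he => Ext.covariant_sequence_exact₁ _ hS e he rfl) h₃ h₂

end ShortExact

lemma of_isUnit {y : R} (hy : y ∈ I) {M : ModuleCat.{u} R}
    (hM : IsUnit (algebraMap R (Module.End R M) y)) (i : ℕ) : LocalExtVanishes I i M := by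
  intro J hJ e
  obtain ⟨n, hn⟩ := hJ hy
  have hid : y ^ n • 𝟙 (ModuleCat.of R (R ⧸ J)) = 0 := by
    ext
    exact (Submodule.Quotient.mk_eq_zero J).mpr (by simpa using hn)
  have he : y ^ n • e = 0 := by
    rw [← Ext.mk₀_id_comp e, ← Ext.smul_comp, ← Ext.mk₀_smul, hid, Ext.mk₀_zero, Ext.zero_comp]
  have hreg := isSMulRegular_ext_of_isUnit (t := y ^ n) (by simpa using hM.pow n)
    (ModuleCat.of R (R ⧸ J)) i
  exact ⟨J, le_rfl, hJ, by rw [hreg.right_eq_zero_of_smul he, map_zero]⟩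

end LocalExtVanishes

section Colon

variable {J J₁ : Ideal R} {t t' s : R}

/-- The short complex `R ⧸ (J : t) ⟶ R ⧸ J ⟶ R ⧸ (J + (t))` whose first map is multiplication by
`t`. The colon ideal is a parameter, so that complexes for different `t` can share it. -/
noncomputable abbrev colonSeq (h : J.colon {t} = J₁) : ShortComplex (ModuleCat.{u} R) where
  X₁ := ModuleCat.of R (R ⧸ J₁)
  X₂ := ModuleCat.of R (R ⧸ J)
  X₃ := ModuleCat.of R (R ⧸ (J ⊔ Ideal.span {t}))
  f := ModuleCat.ofHom <| Submodule.mapQ J₁ J (LinearMap.lsmul R R t) fun a ha => by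
    rw [← h, Submodule.mem_colon_singleton] at ha
    simpa only [Submodule.mem_comap, LinearMap.lsmul_apply, smul_eq_mul, mul_comm t a] using ha
  g := quotMap le_sup_left
  zero := by
    ext
    refine (Submodule.Quotient.mk_eq_zero _).mpr (Ideal.mem_sup_right ?_)
    exact Ideal.mul_mem_right _ _ (Ideal.mem_span_singleton_self t)

lemma colonSeq_shortExact (h : J.colon {t} = J₁) : (colonSeq h).ShortExact := by
  refine ModuleCat.shortComplex_shortExact _ ?_ ?_ (Submodule.factor_surjective le_sup_left)
  · refine fun a => ⟨fun ha => ?_, ?_⟩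
    · obtain ⟨a, rfl⟩ := Submodule.Quotient.mk_surjective _ a
      obtain ⟨b, hb, c, hc, rfl⟩ := Submodule.mem_sup.mp ((Submodule.Quotient.mk_eq_zero _).mp ha)
      obtain ⟨c, rfl⟩ := Ideal.mem_span_singleton.mp hc
      exact ⟨Submodule.Quotient.mk c, (Submodule.Quotient.eq J).mpr (by simpa using hb)⟩
    · rintro ⟨a, rfl⟩
      exact ConcreteCategory.congr_hom (colonSeq h).zero a
  · refine LinearMap.ker_eq_bot.mp (Submodule.ker_liftQ_eq_bot _ _ _ fun a ha => ?_)
    rw [← h, Submodule.mem_colon_singleton, smul_eq_mul, mul_comm]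
    exact (Submodule.Quotient.mk_eq_zero J).mp ha

lemma colonSeq_f_eq_smul (h : J.colon {t} = J₁) (h' : J.colon {t'} = J₁) (ht : t' = t * s) :
    (colonSeq h').f = s • (colonSeq h).f := by
  subst ht
  ext
  exact congrArg Submodule.Quotient.mk ((congrArg (· * 1) (mul_comm t s)).trans (mul_assoc s t 1))

/-- The morphism of short complexes which is multiplication by `s` on `R ⧸ (J : t)` and the identity
on `R ⧸ J`. -/
noncomputable def colonSeqMap (h : J.colon {t} = J₁) (h' : J.colon {t'} = J₁) (ht : t' = t * s) :
    colonSeq h' ⟶ colonSeq h where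
  τ₁ := s • 𝟙 _
  τ₂ := 𝟙 _
  τ₃ := quotMap (sup_le_sup_left (Ideal.span_singleton_le_span_singleton.mpr ⟨s, ht⟩) J)
  comm₁₂ := by
    rw [Category.comp_id, Linear.smul_comp, Category.id_comp, colonSeq_f_eq_smul h h' ht]
  comm₂₃ := (Category.id_comp _).trans (quotMap_comp _ _).symm

lemma extRestrict_extClass_comp (h : J.colon {t} = J₁) (h' : J.colon {t'} = J₁) (ht : t' = t * s)
    {N : ModuleCat.{u} R} {i : ℕ} (f : Ext (ModuleCat.of R (R ⧸ J₁)) N i)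
    (hle : J ⊔ Ideal.span {t'} ≤ J ⊔ Ideal.span {t}) :
    extRestrict hle ((colonSeq_shortExact h).extClass.comp f (add_comm 1 i)) =
      s • (colonSeq_shortExact h').extClass.comp f (add_comm 1 i) := by
  have hnat := ShortComplex.ShortExact.extClass_naturality (colonSeq_shortExact h')
    (colonSeq_shortExact h) (colonSeqMap h h' ht)
  rw [show (colonSeqMap h h' ht).τ₁ = s • 𝟙 _ from rfl, Ext.mk₀_smul, Ext.comp_smul,
    Ext.comp_mk₀_id] at hnat
  rw [← Ext.smul_comp, hnat]
  exact (Ext.comp_assoc _ _ f (zero_add 1) (add_comm 1 i) (by lia)).symm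

lemma exists_colon_pow_eq [IsNoetherianRing R] (J : Ideal R) (y : R) :
    ∃ l, ∀ k, l ≤ k → J.colon {y ^ k} = J.colon {y ^ l} := by
  have hmono : Monotone fun k => J.colon {y ^ k} := by
    refine monotone_nat_of_le_succ fun k a ha => ?_
    rw [Submodule.mem_colon_singleton, smul_eq_mul] at ha ⊢
    rw [pow_succ, ← mul_assoc]
    exact J.mul_mem_right y ha
  obtain ⟨l, hl⟩ := monotone_stabilizes_iff_noetherian.mpr ‹_› ⟨_, hmono⟩
  exact ⟨l, fun k hk => (hl k hk).symm⟩

end Colon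

section Torsion

variable [IsNoetherianRing R] {y : R} {N : ModuleCat.{u} R}

lemma exists_extRestrict_sup_span_pow_eq (hN : Module.IsTorsion' N (Submonoid.powers y))
    {J : Ideal R} {i : ℕ} (e : Ext (ModuleCat.of R (R ⧸ J)) N i) :
    ∃ (k : ℕ) (e' : Ext (ModuleCat.of R (R ⧸ (J ⊔ Ideal.span {y ^ k}))) N i),
      extRestrict le_sup_left e' = e := by
  obtain ⟨l, hl⟩ := exists_colon_pow_eq J y
  obtain ⟨j, hj⟩ := (Submodule.isTorsion'_powers_iff y).mp (isTorsion'_ext hN _ i)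
    ((Ext.mk₀ (colonSeq (hl l le_rfl)).f).comp e (zero_add i))
  have hS := colonSeq_shortExact (hl (l + j) (by lia))
  have he : (Ext.mk₀ (colonSeq (hl (l + j) (by lia))).f).comp e (zero_add i) = 0 := by
    rw [colonSeq_f_eq_smul (hl l le_rfl) _ (pow_add y l j), Ext.mk₀_smul, Ext.smul_comp, hj]
  obtain ⟨e', he'⟩ := Ext.contravariant_sequence_exact₂ hS N e he
  exact ⟨l + j, e', he'⟩

lemma exists_extRestrict_sup_span_pow_eq_zero (hN : Module.IsTorsion' N (Submonoid.powers y))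
    {J : Ideal R} {k i : ℕ} (e : Ext (ModuleCat.of R (R ⧸ (J ⊔ Ideal.span {y ^ k}))) N i)
    (he : extRestrict le_sup_left e = 0) :
    ∃ (k' : ℕ) (h : J ⊔ Ideal.span {y ^ k'} ≤ J ⊔ Ideal.span {y ^ k}), extRestrict h e = 0 := by
  cases i with
  | zero =>
    have hinj := Ext.precomp_mk₀_injective_of_epi N
      (quotMap (le_sup_left : J ≤ J ⊔ Ideal.span {y ^ k}))
    exact ⟨k, le_rfl, by rw [hinj (he.trans (map_zero _).symm), map_zero]⟩
  | succ i =>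
    obtain ⟨l, hl⟩ := exists_colon_pow_eq J y
    have hle {a b : ℕ} (hab : a ≤ b) : J ⊔ Ideal.span {y ^ b} ≤ J ⊔ Ideal.span {y ^ a} :=
      sup_le_sup_left (Ideal.span_singleton_le_span_singleton.mpr (pow_dvd_pow y hab)) J
    have hS := colonSeq_shortExact (hl (k + l) (by lia))
    obtain ⟨f, hf⟩ := Ext.contravariant_sequence_exact₃ hS N (extRestrict (hle (by lia)) e)
      ((extRestrict_extRestrict _ _ e).trans he) (add_comm 1 i)
    obtain ⟨j, hj⟩ := (Submodule.isTorsion'_powers_iff y).mp (isTorsion'_ext hN _ i) f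
    refine ⟨k + l + j, hle (by lia), ?_⟩
    rw [← extRestrict_extRestrict (hle (by lia)) (hle (by lia : k ≤ k + l)), ← hf,
      extRestrict_extClass_comp _ (hl _ (by lia)) (pow_add y (k + l) j), ← Ext.comp_smul, hj,
      Ext.comp_zero]

end Torsion

lemma localExtVanishes_sup_span_iff [IsNoetherianRing R] {I : Ideal R} {y : R}
    {N : ModuleCat.{u} R} (hN : Module.IsTorsion' N (Submonoid.powers y)) {i : ℕ} :
    LocalExtVanishes (I ⊔ Ideal.span {y}) i N ↔ LocalExtVanishes I i N := by
  have hrad {J : Ideal R} (hJ : I ≤ J.radical) (k : ℕ) :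
      I ⊔ Ideal.span {y} ≤ (J ⊔ Ideal.span {y ^ k}).radical := by
    refine sup_le (hJ.trans (Ideal.radical_mono le_sup_left)) ?_
    rw [Ideal.span_singleton_le_iff_mem]
    exact ⟨k, Ideal.mem_sup_right (Ideal.mem_span_singleton_self _)⟩
  refine ⟨fun h J hJ e => ?_, fun h J hJ e => ?_⟩
  · obtain ⟨k, e', rfl⟩ := exists_extRestrict_sup_span_pow_eq hN e
    obtain ⟨J', hJ', hI, he'⟩ := h _ (hrad hJ k) e'
    refine ⟨J' ⊓ J, inf_le_right, ?_, ?_⟩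
    · rw [Ideal.radical_inf]
      exact le_inf (le_sup_left.trans hI) hJ
    · rw [extRestrict_extRestrict, ← extRestrict_extRestrict inf_le_left hJ', he', map_zero]
  · obtain ⟨J', hJ', hI, he⟩ := h J (le_sup_left.trans hJ) e
    obtain ⟨k, hk⟩ := hJ (Ideal.mem_sup_right (Ideal.mem_span_singleton_self y))
    have hk' : J' ⊔ Ideal.span {y ^ k} ≤ J :=
      sup_le hJ' ((Ideal.span_singleton_le_iff_mem _).mpr hk)
    rw [← extRestrict_extRestrict le_sup_left hk'] at he
    obtain ⟨k', hle, he'⟩ := exists_extRestrict_sup_span_pow_eq_zero hN _ he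
    exact ⟨_, hle.trans hk', hrad hI k', by rw [← extRestrict_extRestrict hle hk', he']⟩

section Localization

variable {M : Type*} [AddCommGroup M] [Module R M]

section IsLocalizedModule

variable {L : Type*} [AddCommGroup L] [Module R L] (S : Submonoid R) (f : M →ₗ[R] L)
  [IsLocalizedModule S f]

lemma isTorsion'_ker : Module.IsTorsion' (LinearMap.ker f) S := fun {m} =>
  have ⟨s, hs⟩ := (IsLocalizedModule.eq_zero_iff S f).mp m.2
  ⟨s, Subtype.ext hs⟩

lemma isTorsion'_quotient_range : Module.IsTorsion' (L ⧸ LinearMap.range f) S := by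
  intro z
  obtain ⟨z, rfl⟩ := Submodule.mkQ_surjective _ z
  obtain ⟨⟨m, s⟩, hs⟩ := IsLocalizedModule.surj S f z
  exact ⟨s, (Submodule.Quotient.mk_eq_zero _).mpr ⟨m, hs.symm⟩⟩

end IsLocalizedModule

/-- The cokernel of the localization map `M → M_y`. -/
abbrev LocalizationCoker (y : R) (M : Type*) [AddCommGroup M] [Module R M] : Type _ :=
  LocalizedModule (Submonoid.powers y) M ⧸
    LinearMap.range (LocalizedModule.mkLinearMap (Submonoid.powers y) M)

/-- The map sending `m` to the class of `m / y`. -/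
noncomputable def LocalizationCoker.mkDiv (y : R) (M : Type*) [AddCommGroup M] [Module R M] :
    M →ₗ[R] LocalizationCoker y M :=
  Submodule.mkQ _ ∘ₗ LocalizedModule.divBy ⟨y, Submonoid.mem_powers y⟩ ∘ₗ
    LocalizedModule.mkLinearMap (Submonoid.powers y) M

lemma LocalizationCoker.exists_pow_smul_sub_mem {y : R} {I : Ideal R} {m : M}
    (hm : mkDiv y M m ∈ I • (⊤ : Submodule R (LocalizationCoker y M))) :
    ∃ (l : ℕ) (b : M), y ^ l • m - y ^ (l + 1) • b ∈ I • (⊤ : Submodule R M) := by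
  let f := LocalizedModule.mkLinearMap (Submonoid.powers y) M
  let w := LocalizedModule.divBy ⟨y, Submonoid.mem_powers y⟩ (f m)
  have hw : y • w = f m := LocalizedModule.mul_by_divBy ⟨y, _⟩ (f m)
  rw [← Submodule.range_mkQ, ← Submodule.map_top (Submodule.mkQ _), ← Submodule.map_smul''] at hm
  obtain ⟨z, hz, hzm⟩ := hm
  obtain ⟨b, hb⟩ : w - z ∈ LinearMap.range f := (Submodule.Quotient.eq _).mp hzm.symm
  rw [← Submodule.localized₀_top (Submonoid.powers y) f, ← Submodule.localized₀_smul,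
    SetLike.mem_coe, Submodule.mem_localized₀] at hz
  obtain ⟨m', hm', ⟨_, k, rfl⟩, hk⟩ := hz
  replace hk : y ^ k • z = f m' := (IsLocalizedModule.mk'_eq_iff.mp hk).symm
  have h0 : f (y ^ k • m - y ^ (k + 1) • b - y • m') = 0 := by
    simp only [map_sub, map_smul, ← hw, hb, ← hk]
    module
  obtain ⟨⟨_, j, rfl⟩, hj⟩ := (IsLocalizedModule.eq_zero_iff (Submonoid.powers y) f).mp h0
  replace hj : y ^ j • (y ^ k • m - y ^ (k + 1) • b - y • m') = 0 := hj
  refine ⟨j + k, b, ?_⟩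
  have hsub : y ^ (j + k) • m - y ^ (j + k + 1) • b = y ^ (j + 1) • m' := by
    rw [← sub_eq_zero, ← hj]
    module
  rw [hsub]
  exact Submodule.smul_mem _ _ hm'

lemma comap_limitClosure_localizationCoker_le {r : ℕ} (x : Fin (r + 1) → R) :
    (limitClosure (Fin.tail x)).comap (LocalizationCoker.mkDiv (x 0) M) ≤ limitClosure x :=
  comap_limitClosure_tail_le x _ fun _ _ => LocalizationCoker.exists_pow_smul_sub_mem

end Localization

section Induction

lemma shortExact_range_subtype_mkQ {M L : Type u} [AddCommGroup M] [Module R M] [AddCommGroup L]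
    [Module R L] (f : M →ₗ[R] L) :
    (ModuleCat.shortComplexOfCompEqZero (LinearMap.range f).subtype (LinearMap.range f).mkQ
      (LinearMap.exact_subtype_mkQ _).linearMap_comp_eq_zero).ShortExact :=
  ModuleCat.shortComplex_shortExact _ (LinearMap.exact_subtype_mkQ _)
    (Submodule.injective_subtype _) (Submodule.mkQ_surjective _)

namespace LocalExtVanishes

variable {I : Ideal R} {M L : Type u} [AddCommGroup M] [Module R M] [AddCommGroup L] [Module R L]
  (f : M →ₗ[R] L) {i : ℕ}

lemma of_linearMap (hker : LocalExtVanishes I (i + 1) (.of R (LinearMap.ker f)))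
    (hcoker : LocalExtVanishes I i (.of R (L ⧸ LinearMap.range f)))
    (hL : LocalExtVanishes I (i + 1) (.of R L)) : LocalExtVanishes I (i + 1) (.of R M) := by
  rw [← LinearMap.ker_rangeRestrict] at hker
  exact of_shortExact₂ (LinearMap.shortExact_shortComplexKer f.surjective_rangeRestrict) hker
    (of_shortExact₁ (shortExact_range_subtype_mkQ f) hcoker hL)

lemma coker_of_linearMap (hM : LocalExtVanishes I (i + 1) (.of R M))
    (hker : LocalExtVanishes I (i + 2) (.of R (LinearMap.ker f)))
    (hL : LocalExtVanishes I i (.of R L)) :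
    LocalExtVanishes I i (.of R (L ⧸ LinearMap.range f)) := by
  rw [← LinearMap.ker_rangeRestrict] at hker
  exact of_shortExact₃ (shortExact_range_subtype_mkQ f) hL
    (of_shortExact₃ (LinearMap.shortExact_shortComplexKer f.surjective_rangeRestrict) hM hker)

end LocalExtVanishes

lemma span_range_eq_sup_span_tail {r : ℕ} (x : Fin (r + 1) → R) :
    Ideal.span (Set.range x) = Ideal.span (Set.range (Fin.tail x)) ⊔ Ideal.span {x 0} := by
  rw [Fin.range_fin_succ, Ideal.span_insert, sup_comm]

lemma localExtVanishes_localizedModule {y : R} {I : Ideal R} (hy : y ∈ I) (M : Type u)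
    [AddCommGroup M] [Module R M] (i : ℕ) :
    LocalExtVanishes I i (.of R (LocalizedModule (Submonoid.powers y) M)) :=
  .of_isUnit hy (IsLocalizedModule.map_units
    (LocalizedModule.mkLinearMap (Submonoid.powers y) M) ⟨y, Submonoid.mem_powers y⟩) i

variable [IsNoetherianRing R]

theorem localExtVanishes_of_lt {r : ℕ} (x : Fin r → R) (M : Type u) [AddCommGroup M] [Module R M]
    {i : ℕ} (hi : r < i) : LocalExtVanishes (Ideal.span (Set.range x)) i (.of R M) := by
  induction r generalizing M i with
  | zero =>
    intro _ _ _
    refine ⟨⊥, bot_le, by simp, ?_⟩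
    obtain ⟨i, rfl⟩ := Nat.exists_eq_succ_of_ne_zero hi.ne'
    have : Module.Projective R (R ⧸ (⊥ : Ideal R)) :=
      Module.Projective.of_equiv (Submodule.quotEquivOfEqBot (⊥ : Ideal R) rfl).symm
    have : Projective (ModuleCat.of R (R ⧸ (⊥ : Ideal R))) := inferInstance
    exact Ext.eq_zero_of_projective _
  | succ r ih =>
    obtain ⟨i, rfl⟩ : ∃ j, i = j + 2 := ⟨i - 2, by lia⟩
    let f := LocalizedModule.mkLinearMap (Submonoid.powers (x 0)) M
    rw [span_range_eq_sup_span_tail]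
    refine .of_linearMap f ?_ ?_ (localExtVanishes_localizedModule ?_ M _)
    · exact (localExtVanishes_sup_span_iff (isTorsion'_ker _ f)).mpr (ih _ _ (by lia))
    · exact (localExtVanishes_sup_span_iff (isTorsion'_quotient_range _ f)).mpr
        (ih _ _ (by lia))
    · exact Ideal.mem_sup_right (Ideal.mem_span_singleton_self _)

theorem limitClosure_eq_top_of_localExtVanishes {r : ℕ} (x : Fin r → R) {M : Type u}
    [AddCommGroup M] [Module R M] (h : LocalExtVanishes (Ideal.span (Set.range x)) r (.of R M)) :
    limitClosure (M := M) x = ⊤ := by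
  induction r generalizing M with
  | zero =>
    refine (Submodule.eq_top_iff').mpr fun m => ?_
    let f : ModuleCat.of R (R ⧸ (⊥ : Ideal R)) ⟶ ModuleCat.of R M :=
      ModuleCat.ofHom (Submodule.liftQ ⊥ (LinearMap.toSpanSingleton R M m) bot_le)
    obtain ⟨J, hJ, -, he⟩ := h ⊥ (by simp) (Ext.mk₀ f)
    rw [extRestrict_apply, Ext.mk₀_comp_mk₀, Ext.mk₀_eq_zero_iff] at he
    have hm : (1 : R) • m = 0 := ConcreteCategory.congr_hom he (Submodule.Quotient.mk 1)
    rw [limitClosure_zero, Submodule.mem_bot, ← one_smul R m, hm]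
  | succ r ih =>
    let f := LocalizedModule.mkLinearMap (Submonoid.powers (x 0)) M
    rw [span_range_eq_sup_span_tail] at h
    have hcoker : LocalExtVanishes (Ideal.span (Set.range (Fin.tail x))) r
        (.of R (LocalizationCoker (x 0) M)) := by
      rw [← localExtVanishes_sup_span_iff (isTorsion'_quotient_range (.powers (x 0)) f)]
      refine .coker_of_linearMap f h ?_ (localExtVanishes_localizedModule ?_ M _)
      · exact (localExtVanishes_sup_span_iff (isTorsion'_ker _ f)).mpr
          (localExtVanishes_of_lt _ _ (by lia))
      · exact Ideal.mem_sup_right (Ideal.mem_span_singleton_self _)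
    have hle := comap_limitClosure_localizationCoker_le (M := M) x
    rwa [ih _ hcoker, Submodule.comap_top, top_le_iff] at hle

end Induction

end LocalExt

/-! ### Comparison with the local cohomology functor -/

section LeftDerived

open CategoryTheory

variable {C D : Type*} [Category* C] [Category* D] [Abelian C] [Abelian D]

lemma exists_d_comp_eq_of_homologyι_comp_eq_zero (K : ChainComplex D ℕ) {Q : D} [Injective Q]
    {n p : ℕ} (hp : (ComplexShape.down ℕ).next n = p) (k : K.X n ⟶ Q)
    (hk : K.d (n + 1) n ≫ k = 0)
    (h : K.homologyι n ≫ K.descOpcycles k (n + 1) (by simp) hk = 0) :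
    ∃ g : K.X p ⟶ Q, K.d n p ≫ g = k := by
  have hS := (ShortComplex.mk _ _ (K.homologyι_comp_fromOpcycles n p)).exact_of_f_is_kernel
    (K.homologyIsKernel n p hp)
  refine ⟨hS.descToInjective (K.descOpcycles k (n + 1) (by simp) hk) h, ?_⟩
  rw [← K.p_fromOpcycles, Category.assoc]
  exact (congrArg (K.pOpcycles n ≫ ·) (hS.comp_descToInjective _ h)).trans (K.p_descOpcycles ..)

variable [HasProjectiveResolutions C] {X X' : C} (P : ProjectiveResolution X)
  (P' : ProjectiveResolution X') (F : C ⥤ D) [F.Additive] {n : ℕ} {Q : D}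

/-- The morphism out of a left derived functor `L_n F` induced by a cocycle `F(P_n) ⟶ Q` on a
projective resolution. -/
noncomputable def leftDerivedDesc (k : F.obj (P.complex.X n) ⟶ Q)
    (hk : F.map (P.complex.d (n + 1) n) ≫ k = 0) : (F.leftDerived n).obj X ⟶ Q :=
  (P.isoLeftDerivedObj F n).hom ≫
    ((F.mapHomologicalComplex _).obj P.complex).homologyι n ≫
      HomologicalComplex.descOpcycles ((F.mapHomologicalComplex _).obj P.complex) k (n + 1)
        (by simp) hk

variable {F} (k : F.obj (P.complex.X n) ⟶ Q) (hk : F.map (P.complex.d (n + 1) n) ≫ k = 0)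

lemma map_comp_leftDerivedDesc {g : X' ⟶ X} (φ : ProjectiveResolution.Hom P' P g) :
    (F.leftDerived n).map g ≫ leftDerivedDesc P F k hk =
      leftDerivedDesc P' F (F.map (φ.hom.f n) ≫ k) (by
        rw [← F.map_comp_assoc, ← φ.hom.comm, F.map_comp_assoc, hk, Limits.comp_zero]) := by
  unfold leftDerivedDesc
  rw [ProjectiveResolution.isoLeftDerivedObj_hom_naturality_assoc g P' P φ.hom
    (by simpa using φ.hom_f_zero_comp_π_f_zero)]
  congr 1
  refine (HomologicalComplex.homologyι_naturality_assoc
    ((F.mapHomologicalComplex (ComplexShape.down ℕ)).map φ.hom) n _).trans ?_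
  congr 1
  rw [← cancel_epi (HomologicalComplex.pOpcycles _ _), HomologicalComplex.p_opcyclesMap_assoc]
  exact (congrArg (F.map (φ.hom.f n) ≫ ·) (HomologicalComplex.p_descOpcycles ..)).trans
    (((F.mapHomologicalComplex _).obj P'.complex).p_descOpcycles (F.map (φ.hom.f n) ≫ k) ..).symm

lemma exists_map_d_comp_eq_of_leftDerivedDesc_eq_zero [Injective Q] {p : ℕ}
    (hp : (ComplexShape.down ℕ).next n = p) (h : leftDerivedDesc P F k hk = 0) :
    ∃ g : F.obj (P.complex.X p) ⟶ Q, F.map (P.complex.d n p) ≫ g = k := by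
  rw [leftDerivedDesc, Preadditive.IsIso.comp_left_eq_zero] at h
  exact exists_d_comp_eq_of_homologyι_comp_eq_zero ((F.mapHomologicalComplex _).obj P.complex)
    hp k hk h

end LeftDerived

section Comparison

open CategoryTheory Opposite Limits

variable {R : Type u} [CommRing R] {X X' Y : ModuleCat.{u} R}

/-- The contravariant functor `Hom(-, Y)`, as a functor to the opposite category. -/
noncomputable abbrev homOp (Y : ModuleCat.{u} R) : ModuleCat.{u} R ⥤ (ModuleCat.{u} R)ᵒᵖ :=
  ((linearYoneda R (ModuleCat.{u} R)).obj Y).rightOp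

/-- Morphisms `A ⟶ Y`, as morphisms from `R` to the module `Hom(A, Y)` in the opposite category. -/
noncomputable def homOpEquiv {A : ModuleCat.{u} R} :
    (A ⟶ Y) ≃ ((homOp Y).obj A ⟶ op (ModuleCat.of R R)) :=
  (LinearMap.ringLmapEquivSelf R R (A ⟶ Y)).symm.toEquiv.trans
    (ModuleCat.homEquiv (M := .of R R) (N := .of R (A ⟶ Y)).symm.trans Quiver.Hom.opEquiv)

lemma homOpEquiv_comp {A B : ModuleCat.{u} R} (d : B ⟶ A) (f : A ⟶ Y) :
    homOpEquiv (d ≫ f) = (homOp Y).map d ≫ homOpEquiv f := by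
  refine Quiver.Hom.unop_inj (ModuleCat.hom_ext (LinearMap.ext_ring ?_))
  exact (Linear.comp_smul _ _ _ d (1 : R) f).symm

lemma homOpEquiv_zero {A : ModuleCat.{u} R} : homOpEquiv (0 : A ⟶ Y) = 0 := by
  simpa only [zero_comp, Functor.map_zero] using homOpEquiv_comp (0 : A ⟶ Y) (0 : Y ⟶ Y)

/-- The class of a cocycle `f : P_n ⟶ Y` in the derived functor of `Hom(-, Y)`, as a morphism to
`R` in the opposite category. -/
noncomputable abbrev derivedClass (P : ProjectiveResolution X) {n : ℕ} (f : P.complex.X n ⟶ Y)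
    (hf : P.complex.d (n + 1) n ≫ f = 0) :
    ((homOp Y).leftDerived n).obj X ⟶ op (ModuleCat.of R R) :=
  leftDerivedDesc P (homOp Y) (homOpEquiv f) (by rw [← homOpEquiv_comp, hf, homOpEquiv_zero])

lemma map_comp_derivedClass {P : ProjectiveResolution X} {P' : ProjectiveResolution X'}
    {g : X' ⟶ X} (φ : ProjectiveResolution.Hom P' P g) {n : ℕ} (f : P.complex.X n ⟶ Y)
    (hf : P.complex.d (n + 1) n ≫ f = 0) :
    ((homOp Y).leftDerived n).map g ≫ derivedClass P f hf =
      derivedClass P' (φ.hom.f n ≫ f) (by simp [← φ.hom.comm_assoc, hf]) := by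
  rw [map_comp_leftDerivedDesc _ _ _ _ φ]
  simp only [derivedClass, homOpEquiv_comp]

lemma exists_d_comp_eq_of_derivedClass_eq_zero (P : ProjectiveResolution X) {n p : ℕ}
    (hp : (ComplexShape.down ℕ).next n = p) (f : P.complex.X n ⟶ Y)
    (hf : P.complex.d (n + 1) n ≫ f = 0) (h : derivedClass P f hf = 0) :
    ∃ g : P.complex.X p ⟶ Y, P.complex.d n p ≫ g = f := by
  obtain ⟨g, hg⟩ := exists_map_d_comp_eq_of_leftDerivedDesc_eq_zero P _ _ hp h
  obtain ⟨g, rfl⟩ := homOpEquiv.surjective g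
  rw [← homOpEquiv_comp] at hg
  exact ⟨g, homOpEquiv.injective hg⟩

lemma extMk_eq_zero_of_derivedClass_eq_zero (P : ProjectiveResolution X) {n : ℕ}
    (f : P.complex.X n ⟶ Y) (hf : P.complex.d (n + 1) n ≫ f = 0) (h : derivedClass P f hf = 0) :
    P.extMk f (n + 1) rfl hf = 0 := by
  cases n with
  | zero =>
    obtain ⟨g, rfl⟩ := exists_d_comp_eq_of_derivedClass_eq_zero P ChainComplex.next_nat_zero f hf h
    simp
  | succ p =>
    rw [P.extMk_eq_zero_iff f _ rfl hf p rfl]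
    exact exists_d_comp_eq_of_derivedClass_eq_zero P (ChainComplex.next_nat_succ p) f hf h

lemma exists_map_app_eq_zero_of_subsingleton_colimit_obj {J : Type} [SmallCategory J]
    [IsFiltered J] {C : Type*} [Category* C] (F : J ⥤ C ⥤ ModuleCat.{u} R) [HasColimit F] {M : C}
    (h : Subsingleton ((colimit F).obj M)) {j : J} (a : (F.obj j).obj M) :
    ∃ (k : J) (p : j ⟶ k), (F.map p).app M a = 0 := by
  have hc : IsColimit (((evaluation _ _).obj M).mapCocone (colimit.cocone F)) :=
    isColimitOfPreserves _ (colimit.isColimit F)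
  have := preservesFilteredColimitsOfSize_shrink.{0, u, 0, u} (forget (ModuleCat.{u} R))
  obtain ⟨k, p, _, hpq⟩ := Concrete.isColimit_exists_of_rep_eq (F ⋙ (evaluation _ _).obj M) hc a
    (0 : (F.obj j).obj M) (h.elim _ _)
  exact ⟨k, p, hpq.trans (map_zero _)⟩

lemma exists_map_quotMap_comp_eq_zero {I : Ideal R} {i : ℕ} {M : ModuleCat.{u} R}
    (h : Subsingleton ((localCohomology I i).obj M)) {n : ℕ}
    (a : ((homOp M).leftDerived i).obj (.of R (R ⧸ I ^ n)) ⟶ op (.of R R)) :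
    ∃ (m : ℕ) (hnm : n ≤ m), ((homOp M).leftDerived i).map
      (quotMap (Ideal.pow_le_pow_right (I := I) hnm)) ≫ a = 0 := by
  have : HasColimit (localCohomology.diagram (localCohomology.idealPowersDiagram I) i) :=
    localCohomology.hasColimitDiagram.{u, 0} _ i
  obtain ⟨k, p, hp⟩ := exists_map_app_eq_zero_of_subsingleton_colimit_obj
    (localCohomology.diagram (localCohomology.idealPowersDiagram I) i) h (j := op (op n))
    (a.unop.hom (1 : R))
  exact ⟨k.unop.unop, p.unop.unop.down.down,
    Quiver.Hom.unop_inj (ModuleCat.hom_ext (LinearMap.ext_ring hp))⟩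

lemma localExtVanishes_of_subsingleton_localCohomology [IsNoetherianRing R] (I : Ideal R) (i : ℕ)
    (M : ModuleCat.{u} R) (h : Subsingleton ((localCohomology I i).obj M)) :
    LocalExtVanishes I i M := by
  intro J hJ e
  obtain ⟨n, hn⟩ := Ideal.exists_pow_le_of_le_radical_of_fg hJ (IsNoetherian.noetherian I)
  let P (m : ℕ) : ProjectiveResolution (ModuleCat.of R (R ⧸ I ^ m)) := projectiveResolution _
  obtain ⟨f, hf, hfe⟩ := (P n).extMk_surjective (extRestrict hn e) (i + 1) rfl
  obtain ⟨m, hnm, h₀⟩ := exists_map_quotMap_comp_eq_zero h (derivedClass (P n) f hf)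
  have hle : I ^ m ≤ I ^ n := Ideal.pow_le_pow_right hnm
  let φ : ProjectiveResolution.Hom (P m) (P n) (quotMap hle) :=
    { hom := ProjectiveResolution.lift (quotMap hle) _ _
      hom_f_zero_comp_π_f_zero := by
        simpa using ProjectiveResolution.lift_commutes_zero (quotMap hle) (P m) (P n) }
  refine ⟨I ^ m, hle.trans hn, fun a ha => ⟨m, Ideal.pow_mem_pow ha m⟩, ?_⟩
  rw [← extRestrict_extRestrict hle hn, ← hfe, extRestrict_apply,
    ProjectiveResolution.mk₀_comp_extMk _ _ _ _ φ]
  rw [map_comp_derivedClass φ] at h₀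
  exact extMk_eq_zero_of_derivedClass_eq_zero _ _ _ h₀

end Comparison

theorem limitClosure_eq_top_of_localCohomology_vanishes_and_finiteLength_general
    {R : Type u} [CommRing R] {M : Type u} [AddCommGroup M] [Module R M]
    {r : ℕ} (x : Fin r → R) :
    (IsNoetherianRing R →
        Subsingleton ((localCohomology (Ideal.span (Set.range x)) r).obj (ModuleCat.of R M)) →
        limitClosure (M := M) x = ⊤) ∧
    (Module.Finite R M → moduleDim R M < r → limitClosure (M := M) x = ⊤) ∧
    (IsNoetherian R M → moduleDim R M ≤ r → IsFiniteLength R (M ⧸ limitClosure (M := M) x)) := by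
  have hdim [Module.Finite R M] : moduleDim R M = Module.supportDim R M :=
    (Module.supportDim_eq_ringKrullDim_quotient_annihilator R M).symm
  refine ⟨fun _ h => limitClosure_eq_top_of_localExtVanishes x
      (localExtVanishes_of_subsingleton_localCohomology _ r _ h), fun _ h => ?_, fun _ h => ?_⟩
  · exact limitClosure_eq_top_of_supportDim_lt x (hdim ▸ h)
  · exact isFiniteLength_quotient_limitClosure x (hdim ▸ h)

/-- Let `M` be a finitely generated module of dimension `d` over a Noetherian local ring and
`x = x₁, …, x_r` a sequence of elements of `R`.  Then (i) if `H^r_{(x)}(M) = 0` then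
`(x)^lim_M = M`, in particular this holds when `r > d`; and (ii) if `r = d` then
`M/(x)^lim_M` has finite length. -/
theorem limitClosure_eq_top_of_localCohomology_vanishes_and_finiteLength
    {R : Type u} [CommRing R] [IsNoetherianRing R] [IsLocalRing R]
    {M : Type u} [AddCommGroup M] [Module R M] [Module.Finite R M]
    {d : ℕ} (hd : moduleDim R M = d) {r : ℕ} (x : Fin r → R) :
    (Subsingleton ((localCohomology (Ideal.span (Set.range x)) r).obj (ModuleCat.of R M)) →
        limitClosure (M := M) x = ⊤) ∧
    (d < r → limitClosure (M := M) x = ⊤) ∧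
    (r = d → IsFiniteLength R (M ⧸ limitClosure (M := M) x)) := by
  obtain ⟨h₁, h₂, h₃⟩ :=
    limitClosure_eq_top_of_localCohomology_vanishes_and_finiteLength_general (M := M) x
  exact ⟨h₁ ‹_›, fun h => h₂ ‹_› (hd ▸ mod_cast h), fun h => h₃ inferInstance (by rw [hd, h])⟩
end

section
/- Let R be a Noetherian ring, M a finitely generated R-module, x = x_1, ..., x_r a sequence of elements of R, and N a submodule of M with dim N < r. Then N ⊆ (x)^lim_M. -/
/-!
A module homomorphism maps limit closures into limit closures, and an element `m` of `N` is the
image of `1` under a homomorphism `R ⧸ Ann N → M`. Hence it suffices that in a ring `A` of Krull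
dimension `< r` any `r` elements satisfy `(x₁ ⋯ x_r) ^ n ∈ (x₁ ^ (n + 1), …, x_r ^ (n + 1))` for
some `n`.

This is one half of the Coquand–Lombardi characterisation of the Krull dimension, by induction on
`r`. For `x ∈ A` let `S = {x ^ n * (1 + a * x)}`. Every maximal ideal of `A` meets `S`, so every
chain of primes of `S⁻¹A` can be prolonged in `A`, and `dim S⁻¹A < dim A`. A relation between the
other elements in `S⁻¹A` becomes a relation between all of them in `A` after clearing a denominator
`x ^ n * (1 + a * x)`, because `x ^ n * b ≡ x ^ n * (1 + a * x) * b` modulo `x ^ (n + 1)`.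
-/

open IsLocalRing

lemma krullDim_add_one_le_of_strictMono {α β : Type*} [Preorder α] [Preorder β] (f : α → β)
    (hf : StrictMono f) (hlt : ∀ a, ∃ b, f a < b) :
    Order.krullDim α + 1 ≤ Order.krullDim β := by
  cases isEmpty_or_nonempty α with
  | inl _ => simp [Order.krullDim_eq_bot]
  | inr hα =>
    have : Nonempty β := hα.map f
    rw [Order.krullDim_eq_iSup_length, Order.krullDim_eq_iSup_length]
    norm_cast
    rw [ENat.iSup_add]
    refine iSup_le fun l => ?_
    obtain ⟨b, hb⟩ := hlt l.last
    exact le_iSup (fun l' : LTSeries β => (l'.length : ℕ∞))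
      ((l.map f hf).snoc b (by rwa [LTSeries.last_map]))

lemma ringKrullDim_add_one_le_of_isLocalization {A : Type*} [CommRing A] (S : Submonoid A)
    (B : Type*) [CommRing B] [Algebra A B] [IsLocalization S B]
    (hS : ∀ m : Ideal A, m.IsMaximal → ¬ Disjoint (S : Set A) m) :
    ringKrullDim B + 1 ≤ ringKrullDim A := by
  let f := PrimeSpectrum.comap (algebraMap A B)
  have hf : StrictMono f :=
    Monotone.strictMono_of_injective (fun _ _ hpq => Ideal.comap_mono hpq)
      (PrimeSpectrum.localization_comap_injective B S)
  refine krullDim_add_one_le_of_strictMono f hf fun q => ?_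
  obtain ⟨m, hm, hqm⟩ := Ideal.exists_le_maximal (f q).asIdeal (f q).isPrime.ne_top
  refine ⟨⟨m, hm.isPrime⟩, lt_of_le_of_ne hqm fun hq => hS m hm ?_⟩
  have hdisj : Disjoint (S : Set A) (f q).asIdeal :=
    ((IsLocalization.isPrime_iff_isPrime_disjoint S B q.asIdeal).mp q.isPrime).2
  rwa [hq] at hdisj

section Boundary

variable {A : Type*} [CommRing A]

/-- The multiplicative set `{x ^ n * (1 + a * x)}`; localizing at it gives the (upper) Krull
boundary ring of `x`, in the sense of Coquand and Lombardi. -/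
def boundaryMonoid (x : A) : Submonoid A where
  carrier := {s | ∃ (n : ℕ) (a : A), s = x ^ n * (1 + a * x)}
  one_mem' := ⟨0, 0, by simp⟩
  mul_mem' := by
    rintro _ _ ⟨n, a, rfl⟩ ⟨m, b, rfl⟩
    exact ⟨n + m, a + b + a * b * x, by ring⟩

lemma not_disjoint_boundaryMonoid_of_isMaximal (x : A) (m : Ideal A) (hm : m.IsMaximal) :
    ¬ Disjoint (boundaryMonoid x : Set A) m := by
  rw [Set.not_disjoint_iff]
  by_cases hx : x ∈ m
  · exact ⟨x, ⟨1, 0, by simp⟩, hx⟩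
  · obtain ⟨y, z, hz, hyz⟩ := hm.exists_inv hx
    exact ⟨z, ⟨0, -y, by linear_combination hyz⟩, hz⟩

lemma ringKrullDim_boundary_add_one_le (x : A) (B : Type*) [CommRing B] [Algebra A B]
    [IsLocalization (boundaryMonoid x) B] : ringKrullDim B + 1 ≤ ringKrullDim A :=
  ringKrullDim_add_one_le_of_isLocalization (boundaryMonoid x) B
    (not_disjoint_boundaryMonoid_of_isMaximal x)

lemma exists_pow_mul_mem_span_singleton_sup_of_mem_map_boundary (x : A) (B : Type*) [CommRing B]
    [Algebra A B] [IsLocalization (boundaryMonoid x) B] {I : Ideal A} {b : A}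
    (hb : algebraMap A B b ∈ I.map (algebraMap A B)) :
    ∃ n : ℕ, x ^ n * b ∈ Ideal.span {x ^ (n + 1)} ⊔ I := by
  obtain ⟨_, ⟨n, a, rfl⟩, hI⟩ :=
    (IsLocalization.algebraMap_mem_map_algebraMap_iff (boundaryMonoid x) B I b).mp hb
  exact ⟨n, Ideal.mem_span_singleton_sup.mpr ⟨-(a * b), _, hI, by ring⟩⟩

end Boundary

section MonomialRelation

variable {A : Type*} [CommRing A]

lemma prod_pow_mem_span_range_pow_succ_of_le {ι : Type*} [Fintype ι] (x : ι → A) {k l : ι → ℕ}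
    (hkl : k ≤ l) (hk : ∏ i, x i ^ k i ∈ Ideal.span (Set.range fun i => x i ^ (k i + 1))) :
    ∏ i, x i ^ l i ∈ Ideal.span (Set.range fun i => x i ^ (l i + 1)) := by
  obtain ⟨a, ha⟩ := Ideal.mem_span_range_iff_exists_fun.mp hk
  have hsplit : ∏ i, x i ^ l i = (∏ i, x i ^ (l i - k i)) * ∏ i, x i ^ k i := by
    simp only [← Finset.prod_mul_distrib, ← pow_add, Nat.sub_add_cancel (hkl _)]
  rw [hsplit, ← ha, Finset.mul_sum]
  refine Ideal.sum_mem _ fun i _ => ?_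
  have hdvd : x i ^ (l i + 1) ∣ (∏ j, x j ^ (l j - k j)) * x i ^ (k i + 1) := by
    rw [← Nat.sub_add_cancel (hkl i), add_assoc, pow_add]
    exact mul_dvd_mul_right
      (Finset.dvd_prod_of_mem (fun j => x j ^ (l j - k j)) (Finset.mem_univ i)) _
  rw [mul_left_comm]
  exact Ideal.mul_mem_left _ _ (Ideal.mem_of_dvd _ hdvd (Ideal.subset_span ⟨i, rfl⟩))

lemma exists_prod_pow_mem_span_range_of_boundary {r : ℕ} (x : Fin (r + 1) → A) (B : Type*)
    [CommRing B] [Algebra A B] [IsLocalization (boundaryMonoid (x 0)) B] {k : Fin r → ℕ}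
    (hk : ∏ i : Fin r, algebraMap A B (x i.succ) ^ k i ∈
      Ideal.span (Set.range fun i : Fin r => algebraMap A B (x i.succ) ^ (k i + 1))) :
    ∃ l : Fin (r + 1) → ℕ,
      ∏ i, x i ^ l i ∈ Ideal.span (Set.range fun i => x i ^ (l i + 1)) := by
  let I : Ideal A := Ideal.span (Set.range fun i : Fin r => x i.succ ^ (k i + 1))
  have hmap : algebraMap A B (∏ i : Fin r, x i.succ ^ k i) ∈ I.map (algebraMap A B) := by
    rw [Ideal.map_span, ← Set.range_comp]
    simpa only [Function.comp_def, map_prod, map_pow] using hk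
  obtain ⟨n, hn⟩ := exists_pow_mul_mem_span_singleton_sup_of_mem_map_boundary (x 0) B hmap
  refine ⟨Fin.cons n k, ?_⟩
  rw [Fin.prod_univ_succ, Fin.range_fin_succ, Ideal.span_insert]
  exact hn

lemma exists_prod_pow_mem_span_range_of_ringKrullDim_lt {r : ℕ} (x : Fin r → A)
    (hA : ringKrullDim A < r) :
    ∃ k : Fin r → ℕ, ∏ i, x i ^ k i ∈ Ideal.span (Set.range fun i => x i ^ (k i + 1)) := by
  induction r generalizing A with
  | zero =>
    have : Subsingleton A := not_nontrivial_iff_subsingleton.mp fun _ =>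
      hA.not_ge ringKrullDim_nonneg_of_nontrivial
    exact ⟨0, by simp [Subsingleton.elim (1 : A) 0]⟩
  | succ r ih =>
    let B := Localization (boundaryMonoid (x 0))
    have hB : ringKrullDim B < r :=
      lt_of_add_lt_add_right ((ringKrullDim_boundary_add_one_le (x 0) B).trans_lt hA)
    obtain ⟨k, hk⟩ := ih (fun i => algebraMap A B (x i.succ)) hB
    exact exists_prod_pow_mem_span_range_of_boundary x B hk

lemma exists_prod_pow_succ_mem_span_range_of_ringKrullDim_lt {r : ℕ} (x : Fin r → A)
    (hA : ringKrullDim A < r) :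
    ∃ n : ℕ, (∏ i, x i) ^ (n + 1) ∈ Ideal.span (Set.range fun i => x i ^ (n + 2)) := by
  obtain ⟨k, hk⟩ := exists_prod_pow_mem_span_range_of_ringKrullDim_lt x hA
  have hle : k ≤ fun _ => ∑ j, k j + 1 := fun i =>
    (Finset.single_le_sum_of_canonicallyOrdered (Finset.mem_univ i)).trans (Nat.le_succ _)
  refine ⟨∑ j, k j, ?_⟩
  rw [← Finset.prod_pow]
  exact prod_pow_mem_span_range_pow_succ_of_le x hle hk

end MonomialRelation

section LimitClosure

variable {R : Type*} [CommRing R] {r : ℕ} (x : Fin r → R)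

lemma map_limitClosure_le {M M' : Type*} [AddCommGroup M] [Module R M] [AddCommGroup M']
    [Module R M'] (f : M →ₗ[R] M') : (limitClosure x).map f ≤ limitClosure x := by
  simp only [limitClosure, Submodule.map_iSup]
  refine iSup_mono fun n => Submodule.map_le_iff_le_comap.mpr fun m hm => ?_
  rw [Submodule.mem_comap, LinearMap.lsmul_apply] at hm
  have hfm := Submodule.mem_map_of_mem (f := f) hm
  rw [Submodule.map_smul'', map_smul] at hfm
  exact Submodule.smul_mono le_rfl le_top hfm

lemma limitClosure_eq_top_of_ringKrullDim_lt {A : Type*} [CommRing A] [Algebra R A]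
    (hA : ringKrullDim A < r) : limitClosure (M := A) x = ⊤ := by
  obtain ⟨n, hn⟩ :=
    exists_prod_pow_succ_mem_span_range_of_ringKrullDim_lt (fun i => algebraMap R A (x i)) hA
  refine eq_top_iff.mpr fun a _ => Submodule.mem_iSup_of_mem n ?_
  rw [Submodule.mem_comap, LinearMap.lsmul_apply, Ideal.smul_top_eq_map,
    Submodule.restrictScalars_mem, Ideal.map_span, ← Set.range_comp, Algebra.smul_def]
  refine Ideal.mul_mem_right a _ ?_
  simpa only [Function.comp_def, map_prod, map_pow] using hn

end LimitClosure

theorem submodule_le_limitClosure_of_dim_lt_general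
    {R : Type*} [CommRing R] {M : Type*} [AddCommGroup M] [Module R M]
    {r : ℕ} (x : Fin r → R) (N : Submodule R M)
    (hN : moduleDim R N < (r : WithBot ℕ∞)) :
    N ≤ limitClosure (M := M) x := by
  intro m hm
  have hann : Module.annihilator R N ≤ LinearMap.ker (LinearMap.toSpanSingleton R M m) :=
    fun a ha => congrArg Subtype.val (Module.mem_annihilator.mp ha ⟨m, hm⟩)
  let f : (R ⧸ Module.annihilator R N) →ₗ[R] M := Submodule.liftQ _ _ hann
  have hf : f 1 = m := one_smul R m
  have hone : (1 : R ⧸ Module.annihilator R N) ∈ limitClosure x := by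
    rw [limitClosure_eq_top_of_ringKrullDim_lt x hN]
    exact Submodule.mem_top
  exact hf ▸ map_limitClosure_le x f (Submodule.mem_map_of_mem hone)

/-- If `N` is a submodule of `M` with `dim N < r`, then `N ⊆ (x₁, …, x_r)^lim_M`. -/
theorem submodule_le_limitClosure_of_dim_lt
    {R : Type*} [CommRing R] [IsNoetherianRing R]
    {M : Type*} [AddCommGroup M] [Module R M] [Module.Finite R M]
    {r : ℕ} (x : Fin r → R) (N : Submodule R M)
    (hN : moduleDim R N < (r : WithBot ℕ∞)) :
    N ≤ limitClosure (M := M) x :=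
  submodule_le_limitClosure_of_dim_lt_general x N hN
end
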